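/- arXiv:2603.17660 — 3 statements merged into one kernel-verified Lean document; each statement's English description precedes it below -/
import Mathlib

section
/- For every integer t ≥ 4, there exist polynomials α, β ∈ F_2[w_2,w_3,w_4] such that w_4^{2^{t-1}-2} = α·g_{2^t-2} + (g_{2^t-4})^2 + β·g_{2^t-5} + w_3^{2^{t-1}-1}·g_{2^{t-1}-5} holds in F_2[w_2,w_3,w_4]. -/
open MvPolynomial

/-- The polynomials `g_r = g_r^{(4)}` in `F_2[w_2,w_3,w_4]` (variables `X 0 = w_2`,
`X 1 = w_3`, `X 2 = w_4`): `g_0 = 1`, `g_r = 0` for `r < 0`, and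
`g_r = w_2·g_{r-2} + w_3·g_{r-3} + w_4·g_{r-4}` for `r ≥ 1`. -/
noncomputable def g4 : ℤ → MvPolynomial (Fin 3) (ZMod 2)
  | r =>
    if r ≤ 0 then (if r = 0 then 1 else 0)
    else X 0 * g4 (r - 2) + X 1 * g4 (r - 3) + X 2 * g4 (r - 4)
  termination_by r => r.toNat
  decreasing_by all_goals omega

/-- The ideal `I_{n,4} = (g_{n-3}, g_{n-2}, g_{n-1}, g_n)` of `F_2[w_2,w_3,w_4]`. -/
noncomputable def I4 (n : ℤ) : Ideal (MvPolynomial (Fin 3) (ZMod 2)) :=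
  Ideal.span {g4 (n - 3), g4 (n - 2), g4 (n - 1), g4 n}

/-!
In characteristic two let `P = 1 + w₂x² + w₃x³ + w₄x⁴` and `G = ∑ gᵣxʳ = P⁻¹`. With `q = 2ᵏ`,
the identity `P ^ q * G = P ^ (q - 1)` has on its left the polynomial
`P ^ q = 1 + w₂^q x^(2q) + w₃^q x^(3q) + w₄^q x^(4q)` and on its right a polynomial of degree
`4q - 4` with leading coefficient `w₄^(q - 1)`. Comparing coefficients in degrees `4q - 2` and
`4q - 4` gives `g_{4q-2} = w₂^q g_{2q-2} + w₃^q g_{q-2}` and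
`g_{4q-4} = w₂^q g_{2q-4} + w₃^q g_{q-4} + w₄^(q-1)`. The square of the latter is the theorem, once
`w₂^(2q) g_{2q-4}²` is rewritten by means of `g_{4q-2} ≡ w₂^(2q-1) (mod w₃)` and
`g_{4q-5} = w₃ g_{2q-4}²`.
-/

lemma two_pow_succ_sub_one (k : ℕ) : 2 ^ (k + 1) - 1 = 2 ^ k + (2 ^ k - 1) := by
  have := Nat.one_le_two_pow (n := k)
  lia

section FrobeniusDefect

variable {R : Type*} [CommRing R]

/-- The coefficient of `x ^ r` in `P ^ 2 ^ k * ∑ g r * x ^ r`, where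
`P = 1 + w₂ * x ^ 2 + w₃ * x ^ 3 + w₄ * x ^ 4` over a ring of characteristic two. It measures the
failure at `r` of the linear recurrence obtained from that of `P` by applying the `k`-th iterate of
Frobenius to the coefficients and scaling the shifts by `2 ^ k`. -/
def frobeniusDefect (w₂ w₃ w₄ : R) (g : ℤ → R) (k : ℕ) (r : ℤ) : R :=
  g r + w₂ ^ 2 ^ k * g (r - 2 * 2 ^ k) + w₃ ^ 2 ^ k * g (r - 3 * 2 ^ k)
    + w₄ ^ 2 ^ k * g (r - 4 * 2 ^ k)

lemma frobeniusDefect_succ [CharP R 2] (w₂ w₃ w₄ : R) (g : ℤ → R) (k : ℕ) (r : ℤ) :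
    frobeniusDefect w₂ w₃ w₄ g (k + 1) r =
      frobeniusDefect w₂ w₃ w₄ g k r
        + w₂ ^ 2 ^ k * frobeniusDefect w₂ w₃ w₄ g k (r - 2 * 2 ^ k)
        + w₃ ^ 2 ^ k * frobeniusDefect w₂ w₃ w₄ g k (r - 3 * 2 ^ k)
        + w₄ ^ 2 ^ k * frobeniusDefect w₂ w₃ w₄ g k (r - 4 * 2 ^ k) := by
  have shift_shift (m n : ℤ) : r - m * 2 ^ k - n * 2 ^ k = r - (m + n) * 2 ^ k := by ring
  have shift_succ (m : ℤ) : r - m * 2 ^ (k + 1) = r - (m + m) * 2 ^ k := by ring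
  simp only [frobeniusDefect, shift_shift, shift_succ, pow_succ 2 k, pow_mul]
  norm_num only
  linear_combination
    -(w₂ ^ 2 ^ k * g (r - 2 * 2 ^ k) + w₃ ^ 2 ^ k * g (r - 3 * 2 ^ k)
      + w₄ ^ 2 ^ k * g (r - 4 * 2 ^ k) + w₂ ^ 2 ^ k * w₃ ^ 2 ^ k * g (r - 5 * 2 ^ k)
      + w₂ ^ 2 ^ k * w₄ ^ 2 ^ k * g (r - 6 * 2 ^ k)
      + w₃ ^ 2 ^ k * w₄ ^ 2 ^ k * g (r - 7 * 2 ^ k)) * CharTwo.two_eq_zero (R := R)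

end FrobeniusDefect

/-- `g` is the sequence of coefficients of the inverse of `1 + w₂ * x ^ 2 + w₃ * x ^ 3 + w₄ * x ^ 4`
over a ring of characteristic two (where signs do not matter), extended by zero to negative
indices. If the `wᵢ` are Stiefel–Whitney classes of a bundle of rank four with `w₁ = 0`, the
`g r` are the dual classes. -/
structure IsDualClassSequence {R : Type*} [CommRing R] (w₂ w₃ w₄ : R) (g : ℤ → R) : Prop where
  of_neg : ∀ {r : ℤ}, r < 0 → g r = 0
  zero : g 0 = 1
  recurrence : ∀ {r : ℤ}, 0 < r → g r = w₂ * g (r - 2) + w₃ * g (r - 3) + w₄ * g (r - 4)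

namespace IsDualClassSequence

variable {R : Type*} [CommRing R] {w₂ w₃ w₄ : R} {g : ℤ → R}

lemma one (hg : IsDualClassSequence w₂ w₃ w₄ g) : g 1 = 0 := by
  simp [hg.recurrence one_pos, hg.of_neg]

lemma three (hg : IsDualClassSequence w₂ w₃ w₄ g) : g 3 = w₃ := by
  simp [hg.recurrence three_pos, hg.of_neg, hg.zero, hg.one]

variable [CharP R 2]

lemma frobeniusDefect_eq_zero (hg : IsDualClassSequence w₂ w₃ w₄ g) (k : ℕ) {r : ℤ}
    (hr : 4 * 2 ^ k - 4 < r) : frobeniusDefect w₂ w₃ w₄ g k r = 0 := by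
  induction k generalizing r with
  | zero =>
    have hr_pos : 0 < r := by simpa using hr
    simp only [frobeniusDefect, pow_zero, pow_one, mul_one, add_assoc]
    rw [← add_assoc (w₂ * _), ← hg.recurrence hr_pos, CharTwo.add_self_eq_zero]
  | succ k ih =>
    have hk : (0 : ℤ) < 2 ^ k := by positivity
    rw [pow_succ] at hr
    rw [frobeniusDefect_succ, ih (by lia), ih (by lia), ih (by lia), ih (by lia)]
    ring

lemma frobeniusDefect_four_mul_two_pow_sub_four (hg : IsDualClassSequence w₂ w₃ w₄ g) (k : ℕ) :
    frobeniusDefect w₂ w₃ w₄ g k (4 * 2 ^ k - 4) = w₄ ^ (2 ^ k - 1) := by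
  induction k with
  | zero => simp [frobeniusDefect, hg.of_neg, hg.zero]
  | succ k ih =>
    have hk : (0 : ℤ) < 2 ^ k := by positivity
    have shift_four : (4 * 2 ^ (k + 1) - 4 - 4 * 2 ^ k : ℤ) = 4 * 2 ^ k - 4 := by ring
    rw [frobeniusDefect_succ, shift_four, ih, two_pow_succ_sub_one, pow_add,
      hg.frobeniusDefect_eq_zero k (by lia), hg.frobeniusDefect_eq_zero k (by lia),
      hg.frobeniusDefect_eq_zero k (by lia)]
    ring

lemma scaled_recurrence (hg : IsDualClassSequence w₂ w₃ w₄ g) (k : ℕ) {r : ℤ}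
    (hr : 4 * 2 ^ k - 4 < r) :
    g r = w₂ ^ 2 ^ k * g (r - 2 * 2 ^ k) + w₃ ^ 2 ^ k * g (r - 3 * 2 ^ k)
      + w₄ ^ 2 ^ k * g (r - 4 * 2 ^ k) := by
  have defect_eq_zero := hg.frobeniusDefect_eq_zero k hr
  simp only [frobeniusDefect, add_assoc] at defect_eq_zero
  simpa only [add_assoc] using CharTwo.add_eq_zero.mp defect_eq_zero

/-- As functions of `s`, both sides satisfy the recurrence with weights `w₂ ^ 2, w₃ ^ 2, w₄ ^ 2`. -/
lemma two_mul_add_one (hg : IsDualClassSequence w₂ w₃ w₄ g) (s : ℤ) :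
    g (2 * s + 1) = w₃ * g (s - 1) ^ 2 := by
  rcases lt_trichotomy s 1 with s_lt | rfl | one_lt
  · rcases (show s < 0 ∨ s = 0 by lia) with s_neg | rfl
    · simp [hg.of_neg (show 2 * s + 1 < 0 by lia), hg.of_neg (show s - 1 < 0 by lia)]
    · simp [hg.one, hg.of_neg]
  · simp [hg.three, hg.zero]
  · have odd_step : g (2 * s + 1) = w₂ ^ 2 * g (2 * (s - 2) + 1) + w₃ ^ 2 * g (2 * (s - 3) + 1)
        + w₄ ^ 2 * g (2 * (s - 4) + 1) := by
      convert hg.scaled_recurrence 1 (r := 2 * s + 1) (by lia) using 4 <;> ring_nf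
    have square_step : g (s - 1) ^ 2 = w₂ ^ 2 * g (s - 2 - 1) ^ 2 + w₃ ^ 2 * g (s - 3 - 1) ^ 2
        + w₄ ^ 2 * g (s - 4 - 1) ^ 2 := by
      rw [hg.recurrence (show 0 < s - 1 by lia), CharTwo.add_sq, CharTwo.add_sq]
      simp only [mul_pow, sub_right_comm s 1]
    rw [odd_step, square_step, hg.two_mul_add_one (s - 2), hg.two_mul_add_one (s - 3),
      hg.two_mul_add_one (s - 4)]
    ring
termination_by s.toNat

lemma two_pow_add_two_sub_two (hg : IsDualClassSequence w₂ w₃ w₄ g) (k : ℕ) :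
    g (2 ^ (k + 2) - 2) =
      w₂ ^ 2 ^ k * g (2 ^ (k + 1) - 2) + w₃ ^ 2 ^ k * g (2 ^ k - 2) := by
  have scaled := hg.scaled_recurrence k (r := 2 ^ (k + 2) - 2) (by rw [pow_add]; lia)
  have shift_two : (2 ^ (k + 2) - 2 - 2 * 2 ^ k : ℤ) = 2 ^ (k + 1) - 2 := by ring
  have shift_three : (2 ^ (k + 2) - 2 - 3 * 2 ^ k : ℤ) = 2 ^ k - 2 := by ring
  have shift_four : (2 ^ (k + 2) - 2 - 4 * 2 ^ k : ℤ) = -2 := by ring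
  rwa [shift_two, shift_three, shift_four, hg.of_neg (by norm_num : (-2 : ℤ) < 0), mul_zero,
    add_zero] at scaled

lemma two_pow_add_two_sub_four (hg : IsDualClassSequence w₂ w₃ w₄ g) (k : ℕ) :
    g (2 ^ (k + 2) - 4) =
      w₂ ^ 2 ^ k * g (2 ^ (k + 1) - 4) + w₃ ^ 2 ^ k * g (2 ^ k - 4) + w₄ ^ (2 ^ k - 1) := by
  have top := hg.frobeniusDefect_four_mul_two_pow_sub_four k
  have index_eq : (4 * 2 ^ k - 4 : ℤ) = 2 ^ (k + 2) - 4 := by ring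
  have shift_two : (2 ^ (k + 2) - 4 - 2 * 2 ^ k : ℤ) = 2 ^ (k + 1) - 4 := by ring
  have shift_three : (2 ^ (k + 2) - 4 - 3 * 2 ^ k : ℤ) = 2 ^ k - 4 := by ring
  have shift_four : (2 ^ (k + 2) - 4 - 4 * 2 ^ k : ℤ) = -4 := by ring
  rw [index_eq, frobeniusDefect, shift_two, shift_three, shift_four,
    hg.of_neg (by norm_num : (-4 : ℤ) < 0), mul_zero, add_zero, add_assoc] at top
  rw [← top, add_comm (g _), CharTwo.add_cancel_left]

lemma sq_two_pow_add_two_sub_four (hg : IsDualClassSequence w₂ w₃ w₄ g) (k : ℕ) :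
    g (2 ^ (k + 2) - 4) ^ 2 =
      w₂ ^ 2 ^ (k + 1) * g (2 ^ (k + 1) - 4) ^ 2 + w₃ ^ 2 ^ (k + 1) * g (2 ^ k - 4) ^ 2
        + w₄ ^ (2 ^ (k + 1) - 2) := by
  rw [hg.two_pow_add_two_sub_four, CharTwo.add_sq, CharTwo.add_sq]
  simp only [mul_pow, ← pow_mul, ← pow_succ, Nat.sub_mul, one_mul]

lemma two_pow_succ_sub_five (hg : IsDualClassSequence w₂ w₃ w₄ g) (k : ℕ) :
    g (2 ^ (k + 1) - 5) = w₃ * g (2 ^ k - 4) ^ 2 := by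
  convert hg.two_mul_add_one (2 ^ k - 3) using 2 <;> ring_nf

lemma dvd_two_pow_succ_sub_two_sub_pow (hg : IsDualClassSequence w₂ w₃ w₄ g) (k : ℕ) :
    w₃ ∣ g (2 ^ (k + 1) - 2) - w₂ ^ (2 ^ k - 1) := by
  induction k with
  | zero => simp [hg.zero]
  | succ k ih =>
    have step : g (2 ^ (k + 1 + 1) - 2) - w₂ ^ (2 ^ (k + 1) - 1) =
        w₂ ^ 2 ^ k * (g (2 ^ (k + 1) - 2) - w₂ ^ (2 ^ k - 1)) + w₃ ^ 2 ^ k * g (2 ^ k - 2) := by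
      rw [hg.two_pow_add_two_sub_two, two_pow_succ_sub_one, pow_add]
      ring
    rw [step]
    exact dvd_add (ih.mul_left _) ((dvd_pow_self w₃ (by positivity)).mul_right _)

end IsDualClassSequence

lemma isDualClassSequence_g4 : IsDualClassSequence (X 0) (X 1) (X 2) g4 where
  of_neg hr := by rw [g4, if_pos hr.le, if_neg hr.ne]
  zero := by simp [g4]
  recurrence hr := by rw [g4, if_neg hr.not_ge]

theorem stmt11_general {R : Type*} [CommRing R] [CharP R 2] {w₂ w₃ w₄ : R} {g : ℤ → R}
    (hg : IsDualClassSequence w₂ w₃ w₄ g) (t : ℕ) (ht : 2 ≤ t) :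
    ∃ α β : R,
      w₄ ^ (2 ^ (t - 1) - 2) =
        α * g (2 ^ t - 2) + g (2 ^ t - 4) ^ 2 + β * g (2 ^ t - 5)
          + w₃ ^ (2 ^ (t - 1) - 1) * g (2 ^ (t - 1) - 5) := by
  obtain ⟨k, rfl⟩ := Nat.exists_eq_add_of_le' ht
  obtain ⟨c, hc⟩ := hg.dvd_two_pow_succ_sub_two_sub_pow (k + 1)
  have w₂_pow_eq : w₂ ^ 2 ^ (k + 1) = w₂ * (g (2 ^ (k + 2) - 2) - w₃ * c) := by
    rw [← hc, sub_sub_cancel, mul_pow_sub_one (by positivity)]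
  have w₃_pow_eq : w₃ ^ 2 ^ (k + 1) = w₃ ^ (2 ^ (k + 1) - 1) * w₃ :=
    (pow_sub_one_mul (by positivity) w₃).symm
  refine ⟨w₂ * g (2 ^ (k + 1) - 4) ^ 2, w₂ * c, ?_⟩
  rw [show k + 2 - 1 = k + 1 from rfl, hg.sq_two_pow_add_two_sub_four,
    hg.two_pow_succ_sub_five (k + 1), hg.two_pow_succ_sub_five k, w₂_pow_eq, w₃_pow_eq]
  linear_combination
    -(w₂ * g (2 ^ (k + 1) - 4) ^ 2 * g (2 ^ (k + 2) - 2)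
      + w₃ ^ (2 ^ (k + 1) - 1) * w₃ * g (2 ^ k - 4) ^ 2) * CharTwo.two_eq_zero (R := R)

/-- Lemma 3.7: for every `t ≥ 4` there are `α, β ∈ F_2[w_2,w_3,w_4]` with
`w_4^{2^{t-1}-2} = α g_{2^t-2} + (g_{2^t-4})^2 + β g_{2^t-5} + w_3^{2^{t-1}-1} g_{2^{t-1}-5}`. -/
theorem stmt11 (t : ℕ) (ht : 4 ≤ t) :
    ∃ α β : MvPolynomial (Fin 3) (ZMod 2),
      (X 2 : MvPolynomial (Fin 3) (ZMod 2)) ^ (2 ^ (t - 1) - 2) =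
        α * g4 (2 ^ t - 2) + g4 (2 ^ t - 4) ^ 2 + β * g4 (2 ^ t - 5)
          + X 1 ^ (2 ^ (t - 1) - 1) * g4 (2 ^ (t - 1) - 5) :=
  stmt11_general isDualClassSequence_g4 t (by lia)
end

section
/- For every integer t ≥ 4: w_4^{2^{t-1}-2} ∈ I_{2^t-2,4} and w_4^{2^{t-1}-3} ∉ I_{2^t-2,4}; that is, the image of w_4 in F_2[w_2,w_3,w_4]/I_{2^t-2,4} has height exactly 2^{t-1}-3. (This expresses that the height of the Stiefel–Whitney class w̃_4 in H^*(G̃_{2^t-2,4}; F_2) equals 2^{t-1}-3.) -/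
open MvPolynomial

/-!
Over `F_2` the recurrence gives `g_{2m} = g_m² + w₂ g_{m-1}² + w₄ g_{m-2}²` and
`g_{2m+1} = w₃ g_{m-1}²`; in particular `g_{2^t-3} = 0`.

*Membership.* Modulo `w₃`, the Hankel determinant `g_{n-4} g_n - g_{n-2}²` with `n = 2^t - 2` equals
`w₄^{n/2-1}`. The difference of the two lies not merely in `(w₃)` but in `w₃ I_{n,4}`, and this
stronger claim passes from `n` to `2n + 2` by squaring and multiplying by `w₄²`, because
`w₃ w₄² z² ∈ I_{2n+2,4}` for every `z ∈ I_{n,4}`.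

*Non-membership.* Substitute `w₂ = x + y`, `w₃ = 0`, `w₄ = xy`. Then `g_{2i}` becomes
`(x^{i+1} + y^{i+1}) / (x + y)`, so `x + y` times the image of `I_{2k,4}` lies in `(x^k, y^k)`,
whereas `(x + y)(xy)^{k-2}` does not.
-/

local notation "w₂" => (X 0 : MvPolynomial (Fin 3) (ZMod 2))
local notation "w₃" => (X 1 : MvPolynomial (Fin 3) (ZMod 2))
local notation "w₄" => (X 2 : MvPolynomial (Fin 3) (ZMod 2))

lemma g4_of_neg {r : ℤ} (hr : r < 0) : g4 r = 0 := by
  rw [g4, if_pos hr.le, if_neg hr.ne]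

lemma g4_zero : g4 0 = 1 := by
  rw [g4, if_pos le_rfl, if_pos rfl]

lemma g4_eq_of_ne_zero {r : ℤ} (hr : r ≠ 0) :
    g4 r = w₂ * g4 (r - 2) + w₃ * g4 (r - 3) + w₄ * g4 (r - 4) := by
  rcases hr.lt_or_gt with hneg | hpos
  · rw [g4_of_neg hneg, g4_of_neg (r := r - 2) (by lia), g4_of_neg (r := r - 3) (by lia),
      g4_of_neg (r := r - 4) (by lia)]
    ring
  · rw [g4, if_neg hpos.not_ge]

lemma g4_two_mul_and_two_mul_add_one (m : ℤ) :
    g4 (2 * m) = g4 m ^ 2 + w₂ * g4 (m - 1) ^ 2 + w₄ * g4 (m - 2) ^ 2 ∧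
      g4 (2 * m + 1) = w₃ * g4 (m - 1) ^ 2 := by
  induction m using Int.strongRec (m := 0) with
  | lt m hm =>
    simp [g4_of_neg hm, g4_of_neg (r := 2 * m) (by lia), g4_of_neg (r := 2 * m + 1) (by lia),
      g4_of_neg (r := m - 1) (by lia), g4_of_neg (r := m - 2) (by lia)]
  | ge m hm ih =>
    obtain ⟨even₁, odd₁⟩ := ih (m - 1) (by lia)
    obtain ⟨even₂, odd₂⟩ := ih (m - 2) (by lia)
    have rec_odd := g4_eq_of_ne_zero (r := 2 * m + 1) (by lia)
    refine ⟨?_, by grind⟩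
    rcases eq_or_ne m 0 with rfl | hm₀
    · simp [g4_zero, g4_of_neg]
    · have rec_even := g4_eq_of_ne_zero (r := 2 * m) (by lia)
      have rec_half := g4_eq_of_ne_zero hm₀
      grind

lemma g4_two_mul (m : ℤ) :
    g4 (2 * m) = g4 m ^ 2 + w₂ * g4 (m - 1) ^ 2 + w₄ * g4 (m - 2) ^ 2 :=
  (g4_two_mul_and_two_mul_add_one m).1

lemma g4_two_mul_add_one (m : ℤ) : g4 (2 * m + 1) = w₃ * g4 (m - 1) ^ 2 :=
  (g4_two_mul_and_two_mul_add_one m).2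

lemma w₃_dvd_g4_of_odd {r : ℤ} (hr : Odd r) : w₃ ∣ g4 r := by
  obtain ⟨m, rfl⟩ := hr
  exact ⟨_, g4_two_mul_add_one m⟩

lemma g4_two_pow_sub_three (t : ℕ) : g4 (2 ^ t - 3) = 0 := by
  induction t with
  | zero => exact g4_of_neg (by norm_num)
  | succ t ih =>
    rw [show (2 : ℤ) ^ (t + 1) - 3 = 2 * (2 ^ t - 2) + 1 by ring, g4_two_mul_add_one,
      show (2 : ℤ) ^ t - 2 - 1 = 2 ^ t - 3 by ring, ih]
    ring

lemma g4_mem_I4 {n r : ℤ} (hnr : n - 3 ≤ r) (hrn : r ≤ n) : g4 r ∈ I4 n := by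
  obtain rfl | rfl | rfl | rfl : r = n - 3 ∨ r = n - 2 ∨ r = n - 1 ∨ r = n := by lia
  all_goals exact Ideal.subset_span (by simp)

/-- The `2 × 2` Hankel determinant of `g_{n-4}, g_{n-2}, g_n`. For even `n ≥ 2` it is congruent to
`w₄ ^ (n / 2 - 1)` modulo `w₃`, and it visibly lies in `I4 n`. -/
noncomputable def hankelDet (n : ℤ) : MvPolynomial (Fin 3) (ZMod 2) :=
  g4 (n - 4) * g4 n - g4 (n - 2) ^ 2

lemma hankelDet_mem_I4 (n : ℤ) : hankelDet n ∈ I4 n :=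
  sub_mem (Ideal.mul_mem_left _ _ (g4_mem_I4 (by lia) le_rfl))
    (Ideal.pow_mem_of_mem _ (g4_mem_I4 (by lia) (by lia)) 2 two_pos)

lemma g4_two_mul_add_two_of_g4_sub_one_eq_zero {n : ℤ} (hn : g4 (n - 1) = 0) :
    g4 (2 * n + 2) = g4 (n + 1) ^ 2 + w₂ * g4 n ^ 2 := by
  grind [g4_two_mul (n + 1)]

lemma g4_two_mul_of_g4_sub_one_eq_zero {n : ℤ} (hn : g4 (n - 1) = 0) :
    g4 (2 * n) = g4 n ^ 2 + w₄ * g4 (n - 2) ^ 2 := by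
  grind [g4_two_mul n]

lemma g4_two_mul_sub_two_of_g4_sub_one_eq_zero {n : ℤ} (hn : g4 (n - 1) = 0) :
    g4 (2 * n - 2) = w₂ * g4 (n - 2) ^ 2 + w₄ * g4 (n - 3) ^ 2 := by
  grind [g4_two_mul (n - 1)]

lemma w₃_mul_g4_sub_two_sq_mem_I4 (n : ℤ) : w₃ * g4 (n - 2) ^ 2 ∈ I4 (2 * n + 2) := by
  have odd_gen : g4 (2 * n - 1) = w₃ * g4 (n - 2) ^ 2 := by grind [g4_two_mul_add_one (n - 1)]
  exact odd_gen ▸ g4_mem_I4 (by lia) (by lia)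

lemma w₃_mul_g4_sq_mem_I4 {n : ℤ} (hn : g4 (n - 1) = 0) :
    w₃ * g4 n ^ 2 ∈ I4 (2 * n + 2) := by
  have eq_sub : w₃ * g4 n ^ 2 = w₃ * g4 (2 * n) - w₄ * (w₃ * g4 (n - 2) ^ 2) := by
    rw [g4_two_mul_of_g4_sub_one_eq_zero hn]
    ring
  rw [eq_sub]
  exact sub_mem (Ideal.mul_mem_left _ _ (g4_mem_I4 (by lia) (by lia)))
    (Ideal.mul_mem_left _ _ (w₃_mul_g4_sub_two_sq_mem_I4 n))

lemma w₃_mul_w₄_sq_mul_g4_sub_three_sq_mem_I4 {n : ℤ} (hn : g4 (n - 1) = 0)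
    (hn_ne : n + 1 ≠ 0) : w₃ * w₄ ^ 2 * g4 (n - 3) ^ 2 ∈ I4 (2 * n + 2) := by
  have eq_sum : w₃ * w₄ ^ 2 * g4 (n - 3) ^ 2 =
      w₃ * g4 (2 * n + 2) + w₂ * (w₃ * g4 n ^ 2) + w₃ ^ 2 * (w₃ * g4 (n - 2) ^ 2) := by
    grind [g4_two_mul_add_two_of_g4_sub_one_eq_zero hn, g4_eq_of_ne_zero hn_ne]
  rw [eq_sum]
  exact add_mem (add_mem (Ideal.mul_mem_left _ _ (g4_mem_I4 (by lia) le_rfl))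
    (Ideal.mul_mem_left _ _ (w₃_mul_g4_sq_mem_I4 hn)))
    (Ideal.mul_mem_left _ _ (w₃_mul_g4_sub_two_sq_mem_I4 n))

lemma w₃_mul_w₄_sq_mul_sq_mem_I4 {n : ℤ} (hn : g4 (n - 1) = 0) (hn_ne : n + 1 ≠ 0)
    {z : MvPolynomial (Fin 3) (ZMod 2)} (hz : z ∈ I4 n) :
    w₃ * w₄ ^ 2 * z ^ 2 ∈ I4 (2 * n + 2) := by
  induction hz using Submodule.span_induction with
  | zero => simp
  | add x y _ _ hx hy =>
    rw [CharTwo.add_sq, mul_add]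
    exact add_mem hx hy
  | smul a x _ hx =>
    rw [smul_eq_mul, mul_pow, mul_left_comm]
    exact Ideal.mul_mem_left _ _ hx
  | mem x hx =>
    rcases hx with rfl | rfl | rfl | rfl
    · exact w₃_mul_w₄_sq_mul_g4_sub_three_sq_mem_I4 hn hn_ne
    · rw [mul_right_comm]
      exact Ideal.mul_mem_right _ _ (w₃_mul_g4_sub_two_sq_mem_I4 n)
    · simp [hn]
    · rw [mul_right_comm]
      exact Ideal.mul_mem_right _ _ (w₃_mul_g4_sq_mem_I4 hn)

lemma w₄_sq_mul_hankelDet_sq_sub_hankelDet {n : ℤ} (hn : g4 (n - 1) = 0) (hn_ne : n ≠ 0) :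
    w₄ ^ 2 * hankelDet n ^ 2 - hankelDet (2 * n + 2) =
      w₃ ^ 2 * g4 (n - 3) ^ 2 * g4 n ^ 2 + w₂ * g4 (n - 2) ^ 2 * g4 (n + 1) ^ 2 +
        w₄ * g4 (n - 3) ^ 2 * g4 (2 * n + 2) := by
  have rec_sq : w₄ ^ 2 * g4 (n - 4) ^ 2 =
      g4 n ^ 2 + w₂ ^ 2 * g4 (n - 2) ^ 2 + w₃ ^ 2 * g4 (n - 3) ^ 2 := by
    have rec_n := g4_eq_of_ne_zero hn_ne
    grind
  have hankelDet_sq : w₄ ^ 2 * hankelDet n ^ 2 =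
      w₄ ^ 2 * g4 (n - 4) ^ 2 * g4 n ^ 2 + w₄ ^ 2 * g4 (n - 2) ^ 4 := by
    rw [hankelDet, CharTwo.sub_eq_add, CharTwo.add_sq]
    ring
  rw [hankelDet_sq, rec_sq, hankelDet, show 2 * n + 2 - 4 = 2 * n - 2 by ring, add_sub_cancel_right,
    g4_two_mul_add_two_of_g4_sub_one_eq_zero hn, g4_two_mul_of_g4_sub_one_eq_zero hn,
    g4_two_mul_sub_two_of_g4_sub_one_eq_zero hn]
  grind

lemma w₄_sq_mul_hankelDet_sq_sub_hankelDet_mem {n : ℤ} (hn : g4 (n - 1) = 0)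
    (hn_even : Even n) (hn_ne : n ≠ 0) :
    w₄ ^ 2 * hankelDet n ^ 2 - hankelDet (2 * n + 2) ∈ Ideal.span {w₃} * I4 (2 * n + 2) := by
  obtain ⟨c, hc⟩ := w₃_dvd_g4_of_odd hn_even.add_one
  obtain ⟨d, hd⟩ := w₃_dvd_g4_of_odd (r := n - 3) (hn_even.sub_odd (by decide))
  refine Ideal.mem_span_singleton_mul.mpr
    ⟨g4 (n - 3) ^ 2 * (w₃ * g4 n ^ 2) + w₂ * c ^ 2 * (w₃ * g4 (n - 2) ^ 2) +
      w₄ * w₃ * d ^ 2 * g4 (2 * n + 2), ?_, ?_⟩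
  · exact add_mem (add_mem (Ideal.mul_mem_left _ _ (w₃_mul_g4_sq_mem_I4 hn))
      (Ideal.mul_mem_left _ _ (w₃_mul_g4_sub_two_sq_mem_I4 n)))
      (Ideal.mul_mem_left _ _ (g4_mem_I4 (by lia) le_rfl))
  · rw [w₄_sq_mul_hankelDet_sq_sub_hankelDet hn hn_ne, hc, hd]
    ring

lemma w₄_sq_mul_sq_sub_hankelDet_mem {n : ℤ} (hn : g4 (n - 1) = 0) (hn_even : Even n)
    (hn_ne : n ≠ 0) {f : MvPolynomial (Fin 3) (ZMod 2)}
    (hf : f - hankelDet n ∈ Ideal.span {w₃} * I4 n) :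
    w₄ ^ 2 * f ^ 2 - hankelDet (2 * n + 2) ∈ Ideal.span {w₃} * I4 (2 * n + 2) := by
  obtain ⟨z, hz, hzf⟩ := Ideal.mem_span_singleton_mul.mp hf
  have split : w₄ ^ 2 * f ^ 2 - hankelDet (2 * n + 2) = w₃ * (w₃ * w₄ ^ 2 * z ^ 2) +
      (w₄ ^ 2 * hankelDet n ^ 2 - hankelDet (2 * n + 2)) := by
    rw [eq_add_of_sub_eq hzf.symm, CharTwo.add_sq]
    ring
  rw [split]
  exact add_mem
    (Ideal.mul_mem_mul (Ideal.mem_span_singleton_self _)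
      (w₃_mul_w₄_sq_mul_sq_mem_I4 hn (by grind) hz))
    (w₄_sq_mul_hankelDet_sq_sub_hankelDet_mem hn hn_even hn_ne)

lemma w₄_pow_sub_hankelDet_mem (s : ℕ) :
    w₄ ^ (2 ^ (s + 1) - 2) - hankelDet (2 ^ (s + 2) - 2) ∈
      Ideal.span {w₃} * I4 (2 ^ (s + 2) - 2) := by
  induction s with
  | zero => simp [hankelDet, g4_zero, g4_of_neg, CharTwo.add_self_eq_zero]
  | succ s ih =>
    have exponent : 2 ^ (s + 1 + 1) - 2 = 2 + (2 ^ (s + 1) - 2) * 2 := by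
      have := Nat.one_le_two_pow (n := s)
      lia
    have index : (2 : ℤ) ^ (s + 1 + 2) - 2 = 2 * (2 ^ (s + 2) - 2) + 2 := by ring
    have index_even : Even ((2 : ℤ) ^ (s + 2) - 2) := by simp [Int.even_pow]
    have index_ne : (2 : ℤ) ^ (s + 2) - 2 ≠ 0 := by
      have : (0 : ℤ) < 2 ^ s := by positivity
      lia
    have g4_pred : g4 ((2 : ℤ) ^ (s + 2) - 2 - 1) = 0 := by
      rw [sub_sub]
      exact g4_two_pow_sub_three _
    rw [exponent, index, pow_add w₄, pow_mul]
    exact w₄_sq_mul_sq_sub_hankelDet_mem g4_pred index_even index_ne ih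

lemma w₄_pow_mem_I4 (s : ℕ) : w₄ ^ (2 ^ (s + 1) - 2) ∈ I4 (2 ^ (s + 2) - 2) := by
  have sub_mem_I4 := Ideal.mul_le_right (w₄_pow_sub_hankelDet_mem s)
  simpa only [sub_add_cancel] using add_mem sub_mem_I4 (hankelDet_mem_I4 _)

/-- The substitution `w₂ ↦ x + y`, `w₃ ↦ 0`, `w₄ ↦ xy` with `x = X 0`, `y = X 1`. It takes `g_{2i}`
to the complete homogeneous polynomial `h_i(x, y)` and kills `g_r` for odd `r`. -/
noncomputable def rootSubst :
    MvPolynomial (Fin 3) (ZMod 2) →ₐ[ZMod 2] MvPolynomial (Fin 2) (ZMod 2) :=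
  aeval ![X 0 + X 1, 0, X 0 * X 1]

lemma rootSubst_w₂ : rootSubst w₂ = X 0 + X 1 := by simp [rootSubst]

lemma rootSubst_w₃ : rootSubst w₃ = 0 := by simp [rootSubst]

lemma rootSubst_w₄ : rootSubst w₄ = X 0 * X 1 := by simp [rootSubst]

lemma rootSubst_g4_of_odd {r : ℤ} (hr : Odd r) : rootSubst (g4 r) = 0 := by
  obtain ⟨c, hc⟩ := w₃_dvd_g4_of_odd hr
  rw [hc, map_mul, rootSubst_w₃, zero_mul]

lemma rootSubst_g4_two_mul_sub_two_mul (m : ℕ) :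
    rootSubst (g4 (2 * m - 2)) * (X 0 + X 1) = X 0 ^ m + X 1 ^ m := by
  induction m using Nat.twoStepInduction with
  | zero => simp [g4_of_neg, CharTwo.add_self_eq_zero]
  | one => simp [g4_zero]
  | more m ih₀ ih₁ =>
    have rec_g4 : g4 (2 * (m + 2 : ℕ) - 2) =
        w₂ * g4 (2 * (m + 1 : ℕ) - 2) + w₃ * g4 (2 * m - 1) + w₄ * g4 (2 * m - 2) := by
      grind [g4_eq_of_ne_zero (r := 2 * (m + 2 : ℕ) - 2) (by lia)]
    rw [rec_g4]
    simp only [map_add, map_mul, rootSubst_w₂, rootSubst_w₃, rootSubst_w₄]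
    grind

lemma coeff_eq_zero_of_mem_span_X_pow {σ R : Type*} [CommSemiring R] {k : ℕ}
    {f : MvPolynomial σ R} (hf : f ∈ Ideal.span (Set.range fun i ↦ (X i : MvPolynomial σ R) ^ k))
    {s : σ →₀ ℕ} (hs : ∀ i, s i < k) : coeff s f = 0 := by
  have range_eq : Set.range (fun i ↦ (X i : MvPolynomial σ R) ^ k) =
      (fun e ↦ monomial e 1) '' Set.range fun i ↦ Finsupp.single i k := by
    rw [← Set.range_comp]
    exact congrArg Set.range (funext fun i ↦ X_pow_eq_monomial)
  rw [range_eq, mem_ideal_span_monomial_image] at hf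
  by_contra hcoeff
  obtain ⟨_, ⟨i, rfl⟩, hle⟩ := hf s (mem_support_iff.mpr hcoeff)
  exact (hs i).not_ge (by simpa using hle i)

lemma rootSubst_mul_mem_of_mem_I4 {m : ℕ} {f : MvPolynomial (Fin 3) (ZMod 2)}
    (hf : f ∈ I4 (2 * m)) :
    rootSubst f * (X 0 + X 1) ∈
      Ideal.span (Set.range fun i : Fin 2 ↦ (X i : MvPolynomial (Fin 2) (ZMod 2)) ^ m) := by
  set J := Ideal.span (Set.range fun i : Fin 2 ↦ (X i : MvPolynomial (Fin 2) (ZMod 2)) ^ m)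
  have pow_mem : ∀ i : Fin 2, (X i : MvPolynomial (Fin 2) (ZMod 2)) ^ m ∈ J :=
    fun i ↦ Ideal.subset_span ⟨i, rfl⟩
  suffices I4 (2 * m) ≤ (J.colon {X 0 + X 1}).comap rootSubst from
    Submodule.mem_colon_singleton.mp (this hf)
  simp only [I4, Ideal.span_le, Set.insert_subset_iff, Set.singleton_subset_iff, SetLike.mem_coe,
    Ideal.mem_comap, Submodule.mem_colon_singleton, smul_eq_mul]
  refine ⟨?_, ?_, ?_, ?_⟩
  · rw [rootSubst_g4_of_odd ⟨m - 2, by ring⟩, zero_mul]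
    exact zero_mem J
  · rw [rootSubst_g4_two_mul_sub_two_mul]
    exact add_mem (pow_mem 0) (pow_mem 1)
  · rw [rootSubst_g4_of_odd ⟨m - 1, by ring⟩, zero_mul]
    exact zero_mem J
  · rw [show (2 * m : ℤ) = 2 * (m + 1 : ℕ) - 2 by push_cast; ring,
      rootSubst_g4_two_mul_sub_two_mul, pow_succ, pow_succ]
    exact add_mem (Ideal.mul_mem_right _ _ (pow_mem 0)) (Ideal.mul_mem_right _ _ (pow_mem 1))

lemma coeff_X_mul_X_pow_mul_X_add_X {R : Type*} [CommSemiring R] (m : ℕ) :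
    coeff (Finsupp.single 0 (m + 1) + Finsupp.single 1 m)
      ((X 0 * X 1) ^ m * (X 0 + X 1) : MvPolynomial (Fin 2) R) = 1 := by
  have expand : ((X 0 * X 1) ^ m * (X 0 + X 1) : MvPolynomial (Fin 2) R) =
      monomial (Finsupp.single 0 (m + 1) + Finsupp.single 1 m) 1 +
        monomial (Finsupp.single 0 m + Finsupp.single 1 (m + 1)) 1 := by
    have monomial_eq (a b : ℕ) : monomial (Finsupp.single 0 a + Finsupp.single 1 b) (1 : R) =
        (X 0 ^ a * X 1 ^ b : MvPolynomial (Fin 2) R) := by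
      rw [X_pow_eq_monomial, X_pow_eq_monomial, monomial_mul, one_mul]
    rw [monomial_eq, monomial_eq]
    ring
  have exponents_ne : (Finsupp.single 0 m + Finsupp.single 1 (m + 1) : Fin 2 →₀ ℕ) ≠
      Finsupp.single 0 (m + 1) + Finsupp.single 1 m :=
    fun h ↦ by simpa using DFunLike.congr_fun h 0
  rw [expand, coeff_add, coeff_monomial, coeff_monomial, if_pos rfl, if_neg exponents_ne, add_zero]

lemma w₄_pow_notMem_I4 (m : ℕ) : w₄ ^ m ∉ I4 (2 * m + 4) := by
  intro hmem
  have index : (2 * m + 4 : ℤ) = 2 * (m + 2 : ℕ) := by push_cast; ring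
  have image_mem := rootSubst_mul_mem_of_mem_I4 (index ▸ hmem)
  rw [map_pow, rootSubst_w₄] at image_mem
  have coeff_eq_zero := coeff_eq_zero_of_mem_span_X_pow image_mem
    (s := Finsupp.single 0 (m + 1) + Finsupp.single 1 m) (by simp [Fin.forall_fin_two])
  rw [coeff_X_mul_X_pow_mul_X_add_X] at coeff_eq_zero
  exact one_ne_zero coeff_eq_zero

/-- Proposition 3.8: for every `t ≥ 4`, `w_4^{2^{t-1}-2} ∈ I_{2^t-2,4}` and
`w_4^{2^{t-1}-3} ∉ I_{2^t-2,4}`, i.e. the image of `w_4` in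
`F_2[w_2,w_3,w_4]/I_{2^t-2,4}` has height exactly `2^{t-1} - 3`. -/
theorem stmt12 (t : ℕ) (ht : 4 ≤ t) :
    (X 2 : MvPolynomial (Fin 3) (ZMod 2)) ^ (2 ^ (t - 1) - 2) ∈ I4 (2 ^ t - 2) ∧
      (X 2 : MvPolynomial (Fin 3) (ZMod 2)) ^ (2 ^ (t - 1) - 3) ∉ I4 (2 ^ t - 2) := by
  obtain ⟨s, rfl⟩ := Nat.exists_eq_add_of_le' (show 2 ≤ t by lia)
  refine ⟨w₄_pow_mem_I4 s, ?_⟩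
  have four_le : 2 ^ 2 ≤ 2 ^ s := Nat.pow_le_pow_right two_pos (by lia)
  have index : 2 * ((2 ^ (s + 1) - 3 : ℕ) : ℤ) + 4 = 2 ^ (s + 2) - 2 := by
    push_cast [show 3 ≤ 2 ^ (s + 1) by lia]
    ring
  exact index ▸ w₄_pow_notMem_I4 (2 ^ (s + 1) - 3)
end

section
/- Let t ≥ 5 and let B = F_2[w_2,w_3,w_4]/I_{2^t-2,4}. In the tensor product B ⊗_{F_2} B, writing z(x) = 1⊗x + x⊗1 for the zero-divisor associated to an element x of B, the product z(w_2)^{2^t-1} · z(w_3)^{2^{t-1}-3} · z(w_4)^{2^{t-2}-1} is nonzero (here w_i denotes the image of the variable w_i in B). Consequently, zcl(W_{n,4}) ≥ 2^t + 2^{t-1} + 2^{t-2} - 5 for all n ≥ 2^t - 2. -/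
open MvPolynomial

/-!
Write `n = t - 3`. Macaulay duality describes `I_{2^t-1,4}` as the annihilator, under contraction,
of a dual generator `D_n`. Since the generators of `I_{2^{t+1}-1,4}` are combinations of the
squares of those of `I_{2^t-1,4}`, the dual generators satisfy
`D_{n+1} = E_{n+1} + w_2 w_3^2 w_4^2 D_n^2`, where `E_{n+1}` is an explicit `w_3`-free sum. As
`w_4 I_{2^t-2,4} ⊆ I_{2^t-1,4}`, the functional `f ↦ ⟨D_n, w_4 f⟩` descends to `B`.

Expand the product of powers of zero-divisors and contract the left tensor factor with this
functional. The monomials of `D_n` involving `w_3` have `w_3`-exponent `2` modulo `4`, where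
`(2^{t-1}-3).choose j` is even, and only one `w_3`-free monomial of `D_n` lies in range. So
`w_2^3 w_3^{2^{t-1}-3} w_4^2` alone survives; it is nonzero in `B` since `w_4` times one of its
multiples pairs to `1` with `D_n`.
-/

namespace OrientedGrassmannian

open Finset TensorProduct

section Binomial

variable {p : ℕ} [Fact p.Prime]

lemma dvd_choose_of_digit_lt {n k s : ℕ} (h : n / p ^ s % p < k / p ^ s % p) :
    p ∣ n.choose k := by
  have digit_zero : (∏ i ∈ range (s + 1), (n / p ^ i % p).choose (k / p ^ i % p)) = 0 :=
    prod_eq_zero (self_mem_range_succ s) (Nat.choose_eq_zero_of_lt h)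
  have lucas := Choose.choose_modEq_choose_mul_prod_range_choose (n := n) (k := k) (p := p) (s + 1)
  rwa [digit_zero, Nat.cast_zero, mul_zero, Int.modEq_zero_iff_dvd, Int.natCast_dvd_natCast]
    at lucas

lemma natCast_choose_prime_pow_sub_one (R : Type*) [CommRing R] [CharP R p] (s : ℕ) {k : ℕ}
    (hk : k < p ^ s) : ((p ^ s - 1).choose k : R) = (-1) ^ k := by
  induction k with
  | zero => simp
  | succ k ih =>
    have pascal : (p ^ s).choose (k + 1) = (p ^ s - 1).choose k + (p ^ s - 1).choose (k + 1) := by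
      rw [← Nat.choose_succ_succ', Nat.sub_add_cancel (by omega)]
    have vanish : ((p ^ s).choose (k + 1) : R) = 0 :=
      (CharP.cast_eq_zero_iff R p _).2 ((Fact.out : p.Prime).dvd_choose_pow k.succ_ne_zero hk.ne)
    rw [pascal, Nat.cast_add, ih (by omega)] at vanish
    rw [pow_succ, eq_neg_of_add_eq_zero_right vanish, mul_neg_one]

end Binomial

section SymmetricSum

variable {R : Type*} [Ring R] [CharP R 2]

lemma sum_sum_eq_sum_diag_of_symm {ι : Type*} (s : Finset ι) (F : ι → ι → R)
    (symm : ∀ u v, F u v = F v u) : ∑ v ∈ s, ∑ u ∈ s, F v u = ∑ v ∈ s, F v v := by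
  classical
  have offDiag_sum : ∑ x ∈ s.offDiag, F x.1 x.2 = 0 :=
    sum_involution (fun x _ ↦ x.swap)
      (fun x _ ↦ by rw [Prod.fst_swap, Prod.snd_swap, symm, CharTwo.add_self_eq_zero])
      (fun x hx _ hswap ↦ (mem_offDiag.1 hx).2.2 (congrArg Prod.snd hswap))
      (fun x hx ↦ by
        obtain ⟨hx₁, hx₂, hne⟩ := mem_offDiag.1 hx
        exact mem_offDiag.2 ⟨hx₂, hx₁, hne.symm⟩)
      (fun x _ ↦ x.swap_swap)
  rw [← sum_product', ← diag_union_offDiag, sum_union (disjoint_diag_offDiag s), offDiag_sum,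
    add_zero, sum_diag]

/- The double sum is the square of a trace-like sum, so with `Tr s = ∑ s ^ 2 ^ v` this is the
Artin–Schreier identity `Tr s + (Tr s) ^ 2 = s + s ^ 2 ^ m`. -/
lemma sum_two_pow_add_sum_sum (F : ℕ → R) (m : ℕ) :
    ∑ v ∈ range m, (F (2 ^ v) + ∑ u ∈ range m, F (2 ^ v + 2 ^ u)) = F 1 + F (2 ^ m) := by
  rw [sum_add_distrib, sum_sum_eq_sum_diag_of_symm _ (fun v u ↦ F (2 ^ v + 2 ^ u))
    (fun _ _ ↦ by rw [add_comm]), ← sum_add_distrib]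
  simp_rw [← two_mul, ← pow_succ', ← CharTwo.sub_eq_add (F (2 ^ _))]
  rw [sum_range_sub', pow_zero, CharTwo.sub_eq_add]

end SymmetricSum

section ZeroDivisor

variable {ι R B : Type*} [CommRing R] [CommRing B] [Algebra R B]

variable (R) in
/-- The zero-divisor `z(x) = 1 ⊗ x + x ⊗ 1`. It lies in the kernel of multiplication only in
characteristic two. -/
def zeroDivisor (x : B) : B ⊗[R] B := 1 ⊗ₜ x + x ⊗ₜ 1

lemma zeroDivisor_pow (x : B) (N : ℕ) :
    zeroDivisor R x ^ N = ∑ a ∈ range (N + 1), N.choose a • ((x ^ a) ⊗ₜ[R] (x ^ (N - a))) := by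
  rw [zeroDivisor, add_comm, add_pow]
  refine sum_congr rfl fun a _ ↦ ?_
  rw [Algebra.TensorProduct.tmul_pow, Algebra.TensorProduct.tmul_pow, one_pow, one_pow,
    Algebra.TensorProduct.tmul_mul_tmul, mul_one, one_mul, nsmul_eq_mul, mul_comm]

lemma prod_tmul (s : Finset ι) (x y : ι → B) :
    ∏ i ∈ s, x i ⊗ₜ[R] y i = (∏ i ∈ s, x i) ⊗ₜ (∏ i ∈ s, y i) := by
  classical
  induction s using Finset.induction_on with
  | empty => simp [Algebra.TensorProduct.one_def]
  | insert i s hi ih =>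
    rw [prod_insert hi, ih, Algebra.TensorProduct.tmul_mul_tmul, prod_insert hi, prod_insert hi]

variable [Fintype ι]

lemma prod_zeroDivisor_pow [DecidableEq ι] (x : ι → B) (N : ι → ℕ) :
    ∏ i, zeroDivisor R (x i) ^ N i = ∑ a ∈ Fintype.piFinset fun i ↦ range (N i + 1),
      (∏ i, (N i).choose (a i)) • ((∏ i, x i ^ a i) ⊗ₜ[R] (∏ i, x i ^ (N i - a i))) := by
  simp_rw [zeroDivisor_pow, prod_univ_sum, nsmul_eq_mul, prod_mul_distrib, prod_tmul,
    Nat.cast_prod]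

lemma prod_zeroDivisor_pow_ne_zero (x : ι → B) (N e : ι → ℕ) (φ : B →ₗ[R] R) (heN : e ≤ N)
    (detect : ∀ a ≤ N, (∏ i, ((N i).choose (a i) : R)) * φ (∏ i, x i ^ a i)
      = if a = e then 1 else 0)
    (hne : ∏ i, x i ^ (N i - e i) ≠ 0) :
    ∏ i, zeroDivisor R (x i) ^ N i ≠ 0 := by
  classical
  refine fun hzero ↦ hne ?_
  have contracted := congrArg (TensorProduct.lid R B ∘ φ.rTensor B) hzero
  have coefficient (a) (ha : a ∈ Fintype.piFinset fun i ↦ range (N i + 1)) :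
      (∏ i, (N i).choose (a i)) • φ (∏ i, x i ^ a i) = if a = e then 1 else 0 := by
    rw [← detect a fun i ↦ mem_range_succ_iff.1 (Fintype.mem_piFinset.1 ha i), nsmul_eq_mul,
      Nat.cast_prod]
  have he : e ∈ Fintype.piFinset fun i ↦ range (N i + 1) :=
    Fintype.mem_piFinset.2 fun i ↦ mem_range_succ_iff.2 (heN i)
  simp only [prod_zeroDivisor_pow, Function.comp_apply, map_sum, map_nsmul, map_zero,
    LinearMap.rTensor_tmul, TensorProduct.lid_tmul, ← smul_assoc] at contracted
  rwa [sum_congr rfl fun a ha ↦ by rw [coefficient a ha, ite_smul, one_smul, zero_smul],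
    sum_ite_eq' _ e, if_pos he] at contracted

end ZeroDivisor

section KerIdeal

variable {R A M : Type*} [CommRing R] [CommRing A] [Algebra R A] [AddCommGroup M] [Module R M]

/-- The largest ideal contained in the kernel of a linear map `ψ`; for `ψ` a functional on a
polynomial ring, this is its annihilator under contraction in the sense of Macaulay. -/
def kerIdeal (ψ : A →ₗ[R] M) : Ideal A where
  carrier := {h | ∀ f, ψ (f * h) = 0}
  zero_mem' := by simp
  add_mem' hg hh f := by rw [mul_add, map_add, hg f, hh f, add_zero]
  smul_mem' g h hh f := by rw [smul_eq_mul, ← mul_assoc, hh]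

lemma map_eq_zero_of_mem_kerIdeal {ψ : A →ₗ[R] M} {h : A} (hh : h ∈ kerIdeal ψ) : ψ h = 0 := by
  simpa using hh 1

lemma exists_map_quotient_mk_eq {I : Ideal A} {ψ : A →ₗ[R] M} (hψ : ∀ f ∈ I, ψ f = 0) :
    ∃ φ : (A ⧸ I) →ₗ[R] M, ∀ f, φ (Ideal.Quotient.mk I f) = ψ f :=
  ⟨(I.restrictScalars R).liftQ ψ hψ ∘ₗ (Submodule.Quotient.restrictScalarsEquiv R I).symm,
    fun _ ↦ rfl⟩

end KerIdeal

section Cartier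

variable {σ R : Type*} [CommSemiring R]

/-- The Cartier-type operator sending `X ^ (p • m + (p - 1, …, p - 1))` to `X ^ m` and all other
monomials to `0`. -/
noncomputable def cartier (p : ℕ) : MvPolynomial σ R →ₗ[R] MvPolynomial σ R := by
  classical exact (basisMonomials σ R).constr R fun m ↦
    if ∀ i, m i % p = p - 1 then monomial (m.mapRange (· / p) (Nat.zero_div p)) 1 else 0

open Classical in
lemma cartier_monomial (p : ℕ) (m : σ →₀ ℕ) (r : R) : cartier p (monomial m r) =
    if ∀ i, m i % p = p - 1 then monomial (m.mapRange (· / p) (Nat.zero_div p)) r else 0 := by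
  have hm : monomial m r = r • basisMonomials σ R m := by simp [smul_monomial]
  rw [hm, map_smul, cartier, Module.Basis.constr_basis]
  split_ifs <;> simp [smul_monomial]

lemma cartier_expand_mul {p : ℕ} (hp : 0 < p) (f g : MvPolynomial σ R) :
    cartier p (expand p f * g) = f * cartier p g := by
  classical
  induction f using MvPolynomial.induction_on' with
  | add f₁ f₂ h₁ h₂ => rw [map_add, add_mul, map_add, h₁, h₂, add_mul]
  | monomial s a =>
    induction g using MvPolynomial.induction_on' with
    | add g₁ g₂ h₁ h₂ => rw [mul_add, map_add, h₁, h₂, map_add, mul_add]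
    | monomial m b =>
      have hmod (i : σ) : (p • s + m) i % p = m i % p := by simp
      have hdiv : (p • s + m).mapRange (· / p) (Nat.zero_div p)
          = s + m.mapRange (· / p) (Nat.zero_div p) := by
        ext i; simp [Nat.mul_add_div hp]
      rw [expand_monomial, monomial_mul, cartier_monomial, cartier_monomial]
      simp_rw [hmod, hdiv]
      split_ifs
      · rw [monomial_mul]
      · rw [mul_zero]

end Cartier

/-- The ring `F_2[w_2, w_3, w_4]`, with `X 0 = w_2`, `X 1 = w_3` and `X 2 = w_4`. -/
abbrev WRing := MvPolynomial (Fin 3) (ZMod 2)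

section Recurrence

lemma g4_of_neg {r : ℤ} (hr : r < 0) : g4 r = 0 := by
  rw [g4, if_pos hr.le, if_neg hr.ne]

lemma g4_zero : g4 0 = 1 := by
  rw [g4, if_pos le_rfl, if_pos rfl]

lemma g4_of_pos {r : ℤ} (hr : 0 < r) :
    g4 r = X 0 * g4 (r - 2) + X 1 * g4 (r - 3) + X 2 * g4 (r - 4) := by
  rw [g4, if_neg hr.not_ge]

/- In generating-function form `∑ g_r = 1 / w` with `w = 1 + w_2 + w_3 + w_4`, so that
`∑ g_r = w * (∑ g_r) ^ 2`; the two identities are its even and odd parts. -/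
lemma g4_two_mul_and_g4_two_mul_add_one (r : ℤ) :
    g4 (2 * r) = g4 r ^ 2 + X 0 * g4 (r - 1) ^ 2 + X 2 * g4 (r - 2) ^ 2 ∧
      g4 (2 * r + 1) = X 1 * g4 (r - 1) ^ 2 := by
  induction r using Int.strongRec (m := 1) with
  | lt r hr =>
    rcases (show r ≤ 0 by omega).eq_or_lt with rfl | hr
    · have hneg (s : ℤ) (hs : s < 0) : g4 s = 0 := g4_of_neg hs
      norm_num [g4_of_pos one_pos, g4_zero, hneg]
    · simp [g4_of_neg hr, g4_of_neg (show 2 * r < 0 by omega),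
        g4_of_neg (show 2 * r + 1 < 0 by omega), g4_of_neg (show r - 1 < 0 by omega),
        g4_of_neg (show r - 2 < 0 by omega)]
  | ge r hr ih =>
    obtain ⟨even₁, odd₁⟩ := ih (r - 1) (by omega)
    obtain ⟨even₂, odd₂⟩ := ih (r - 2) (by omega)
    rw [show r - 1 - 1 = r - 2 by ring, show r - 1 - 2 = r - 3 by ring] at even₁
    rw [show r - 2 - 1 = r - 3 by ring, show r - 2 - 2 = r - 4 by ring] at even₂
    rw [show r - 1 - 1 = r - 2 by ring] at odd₁
    rw [show r - 2 - 1 = r - 3 by ring] at odd₂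
    have two_eq_zero : (2 : WRing) = 0 := CharTwo.two_eq_zero
    constructor
    · rw [g4_of_pos (by omega), show 2 * r - 2 = 2 * (r - 1) by ring,
        show 2 * r - 3 = 2 * (r - 2) + 1 by ring, show 2 * r - 4 = 2 * (r - 2) by ring,
        even₁, odd₂, even₂, g4_of_pos (show 0 < r by omega), CharTwo.add_sq, CharTwo.add_sq]
      linear_combination (X 0 * X 2 * g4 (r - 3) ^ 2) * two_eq_zero
    · rw [g4_of_pos (by omega), show 2 * r + 1 - 2 = 2 * (r - 1) + 1 by ring,
        show 2 * r + 1 - 3 = 2 * (r - 1) by ring, show 2 * r + 1 - 4 = 2 * (r - 2) + 1 by ring,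
        odd₁, even₁, odd₂]
      linear_combination
        (X 0 * X 1 * g4 (r - 2) ^ 2 + X 1 * X 2 * g4 (r - 3) ^ 2) * two_eq_zero

lemma g4_two_mul (r : ℤ) :
    g4 (2 * r) = g4 r ^ 2 + X 0 * g4 (r - 1) ^ 2 + X 2 * g4 (r - 2) ^ 2 :=
  (g4_two_mul_and_g4_two_mul_add_one r).1

lemma g4_two_mul_add_one (r : ℤ) : g4 (2 * r + 1) = X 1 * g4 (r - 1) ^ 2 :=
  (g4_two_mul_and_g4_two_mul_add_one r).2

lemma w4_mul_mem_I4_add_one {n : ℤ} (hn : 0 ≤ n) {f : WRing} (hf : f ∈ I4 n) :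
    X 2 * f ∈ I4 (n + 1) := by
  have g4_mem (d : ℤ) (hd : 0 ≤ d ∧ d ≤ 3) : g4 (n + 1 - d) ∈ I4 (n + 1) := by
    apply Ideal.subset_span
    obtain rfl | rfl | rfl | rfl : d = 0 ∨ d = 1 ∨ d = 2 ∨ d = 3 := by omega
    all_goals simp
  have w4_mul_g4_mem : X 2 * g4 (n - 3) ∈ I4 (n + 1) := by
    have recurrence := g4_of_pos (show 0 < n + 1 by omega)
    rw [show n + 1 - 4 = n - 3 by ring, ← sub_eq_iff_eq_add'] at recurrence
    rw [← recurrence]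
    exact sub_mem (by simpa using g4_mem 0 (by simp)) (add_mem
      (Ideal.mul_mem_left _ _ (g4_mem 2 (by simp))) (Ideal.mul_mem_left _ _ (g4_mem 3 (by simp))))
  induction hf using Submodule.span_induction with
  | mem f hf =>
    obtain rfl | rfl | rfl | rfl := hf
    · exact w4_mul_g4_mem
    · exact Ideal.mul_mem_left _ _ (by simpa [sub_eq_add_neg, add_assoc] using g4_mem 3 (by simp))
    · exact Ideal.mul_mem_left _ _ (by simpa [sub_eq_add_neg, add_assoc] using g4_mem 2 (by simp))
    · exact Ideal.mul_mem_left _ _ (by simpa using g4_mem 1 (by simp))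
  | zero => simp
  | add f₁ f₂ _ _ h₁ h₂ => rw [mul_add]; exact add_mem h₁ h₂
  | smul r f _ h => rw [smul_eq_mul, mul_left_comm]; exact Ideal.mul_mem_left _ _ h

lemma g4_two_pow_sub_three (m : ℕ) : g4 (2 ^ (m + 1) - 3) = 0 := by
  induction m with
  | zero => exact g4_of_neg (by norm_num)
  | succ m ih =>
    rw [show (2 : ℤ) ^ (m + 1 + 1) - 3 = 2 * (2 ^ (m + 1) - 2) + 1 by ring, g4_two_mul_add_one,
      show (2 : ℤ) ^ (m + 1) - 2 - 1 = 2 ^ (m + 1) - 3 by ring, ih, zero_pow two_ne_zero, mul_zero]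

/-- `p_m = g_{2 ^ (m + 1) - 2}`. -/
noncomputable def pPoly (m : ℕ) : WRing := g4 (2 ^ (m + 1) - 2)

/-- `q_m = g_{2 ^ (m + 2) - 4}`. -/
noncomputable def qPoly (m : ℕ) : WRing := g4 (2 ^ (m + 2) - 4)

lemma g4_two_pow_sub_one (m : ℕ) : g4 (2 ^ (m + 2) - 1) = X 1 * pPoly m ^ 2 := by
  rw [show (2 : ℤ) ^ (m + 2) - 1 = 2 * (2 ^ (m + 1) - 1) + 1 by ring, g4_two_mul_add_one,
    show (2 : ℤ) ^ (m + 1) - 1 - 1 = 2 ^ (m + 1) - 2 by ring, pPoly]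

lemma pPoly_zero : pPoly 0 = 1 := by
  norm_num [pPoly, g4_zero]

lemma pPoly_succ (m : ℕ) :
    pPoly (m + 1) = g4 (2 ^ (m + 1) - 1) ^ 2 + X 0 * pPoly m ^ 2 := by
  rw [pPoly, show (2 : ℤ) ^ (m + 1 + 1) - 2 = 2 * (2 ^ (m + 1) - 1) by ring, g4_two_mul,
    show (2 : ℤ) ^ (m + 1) - 1 - 2 = 2 ^ (m + 1) - 3 by ring, g4_two_pow_sub_three,
    show (2 : ℤ) ^ (m + 1) - 1 - 1 = 2 ^ (m + 1) - 2 by ring, ← pPoly, zero_pow two_ne_zero,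
    mul_zero, add_zero]

lemma pPoly_one : pPoly 1 = X 0 := by
  have g4_one : g4 1 = 0 := by simpa using g4_two_pow_sub_three 1
  norm_num [pPoly_succ, pPoly_zero, g4_one]

lemma pPoly_add_two (m : ℕ) :
    pPoly (m + 2) = X 0 * pPoly (m + 1) ^ 2 + (X 1 * pPoly m ^ 2) ^ 2 := by
  rw [pPoly_succ, g4_two_pow_sub_one, add_comm]

lemma qPoly_zero : qPoly 0 = 1 := by
  norm_num [qPoly, g4_zero]

lemma qPoly_succ (m : ℕ) : qPoly (m + 1) = pPoly (m + 1) ^ 2 + X 2 * qPoly m ^ 2 := by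
  rw [qPoly, show (2 : ℤ) ^ (m + 1 + 2) - 4 = 2 * (2 ^ (m + 1 + 1) - 2) by ring, g4_two_mul,
    show (2 : ℤ) ^ (m + 1 + 1) - 2 - 1 = 2 ^ (m + 1 + 1) - 3 by ring, g4_two_pow_sub_three,
    show (2 : ℤ) ^ (m + 1 + 1) - 2 - 2 = 2 ^ (m + 2) - 4 by ring, ← pPoly, ← qPoly,
    zero_pow two_ne_zero, mul_zero, add_zero]

lemma I4_two_pow_sub_one_le {K : Ideal WRing} {m : ℕ} (hq : qPoly (m + 1) ∈ K)
    (hp : pPoly (m + 2) ∈ K) (hwp : X 1 * pPoly (m + 1) ^ 2 ∈ K) :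
    I4 (2 ^ (m + 3) - 1) ≤ K := by
  refine Ideal.span_le.2 ?_
  rintro _ (rfl | rfl | rfl | rfl)
  · rwa [show (2 : ℤ) ^ (m + 3) - 1 - 3 = 2 ^ (m + 1 + 2) - 4 by ring, ← qPoly]
  · rw [show (2 : ℤ) ^ (m + 3) - 1 - 2 = 2 ^ (m + 2 + 1) - 3 by ring, g4_two_pow_sub_three]
    exact K.zero_mem
  · rwa [show (2 : ℤ) ^ (m + 3) - 1 - 1 = 2 ^ (m + 2 + 1) - 2 by ring, ← pPoly]
  · rwa [show (2 : ℤ) ^ (m + 3) - 1 = 2 ^ (m + 1 + 2) - 1 by ring, g4_two_pow_sub_one]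

end Recurrence

section WMonomial

/-- The monomial `w_2 ^ i * w_3 ^ j * w_4 ^ k`. -/
noncomputable def wMonomial (i j k : ℕ) : WRing := X 0 ^ i * X 1 ^ j * X 2 ^ k

lemma wMonomial_mul_wMonomial (i j k a b c : ℕ) :
    wMonomial i j k * wMonomial a b c = wMonomial (i + a) (j + b) (k + c) := by
  simp only [wMonomial]; ring

lemma monomial_one_eq_wMonomial (m : Fin 3 →₀ ℕ) :
    monomial m (1 : ZMod 2) = wMonomial (m 0) (m 1) (m 2) := by
  rw [monomial_eq, C_1, one_mul, Finsupp.prod_fintype _ _ (fun _ ↦ pow_zero _),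
    Fin.prod_univ_three, wMonomial]

lemma wMonomial_eq_monomial (i j k : ℕ) :
    wMonomial i j k = monomial (Finsupp.equivFunOnFinite.symm ![i, j, k]) 1 := by
  simp [monomial_one_eq_wMonomial]

@[elab_as_elim]
lemma wMonomial_induction {P : WRing → Prop} (f : WRing) (wMonomial : ∀ i j k, P (wMonomial i j k))
    (add : ∀ f g, P f → P g → P (f + g)) : P f := by
  induction f using MvPolynomial.induction_on' with
  | add f g hf hg => exact add f g hf hg
  | monomial m r =>
    obtain rfl | rfl : r = 0 ∨ r = 1 := by revert r; decide
    · simpa [CharTwo.add_self_eq_zero] using add _ _ (wMonomial 0 0 0) (wMonomial 0 0 0)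
    · rw [monomial_one_eq_wMonomial]; exact wMonomial _ _ _

lemma cartier_sq_mul (f g : WRing) : cartier 2 (f ^ 2 * g) = f * cartier 2 g := by
  rw [← expand_zmod, cartier_expand_mul two_pos]

lemma cartier_wMonomial (i j k : ℕ) : cartier 2 (wMonomial i j k) =
    if i % 2 = 1 ∧ j % 2 = 1 ∧ k % 2 = 1 then wMonomial (i / 2) (j / 2) (k / 2) else 0 := by
  rw [wMonomial_eq_monomial, cartier_monomial, monomial_one_eq_wMonomial]
  simp [Fin.forall_fin_succ]

end WMonomial

section DualFunctional

/-- The coefficient of `w_2 ^ i * w_4 ^ k` in the part `E_n` of the dual generator `D_n` that is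
free of `w_3`, where `E_n = ∑_s w_2 ^ (M - 4 + 2 * s) * w_4 ^ (M - 2 - s)` with `M = 2 ^ (n + 2)`
and `s` running over `0, 1, 2, 4, …, M / 2`. The equations between exponents are rearranged so
that no truncated subtraction occurs. -/
def edgeCoeff (n i k : ℕ) : ZMod 2 :=
  (if i + 4 = 2 ^ (n + 2) ∧ k + 2 = 2 ^ (n + 2) then 1 else 0) +
    ∑ u ∈ range (n + 2),
      if i + 4 = 2 ^ (n + 2) + 2 * 2 ^ u ∧ k + 2 + 2 ^ u = 2 ^ (n + 2) then 1 else 0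

/-- The coefficient of `w_2 ^ i * w_3 ^ j * w_4 ^ k` in Macaulay's dual generator `D_n` of the
ideal `I_{2 ^ (n + 3) - 1, 4}`, given by `D_0 = E_0 + w_2 * w_3 ^ 2` and
`D_{n + 1} = E_{n + 1} + w_2 * w_3 ^ 2 * w_4 ^ 2 * D_n ^ 2`, with `E_n` as in `edgeCoeff`. -/
def dualCoeff : ℕ → ℕ → ℕ → ℕ → ZMod 2
  | 0, i, j, k => if j = 0 then edgeCoeff 0 i k else if i = 1 ∧ j = 2 ∧ k = 0 then 1 else 0
  | n + 1, i, j, k =>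
    if j = 0 then edgeCoeff (n + 1) i k
    else if 2 ≤ k ∧ i % 2 = 1 ∧ j % 2 = 0 ∧ k % 2 = 0 then
      dualCoeff n (i / 2) (j / 2 - 1) (k / 2 - 1)
    else 0

/-- The functional pairing a polynomial with the dual generator `D_n`, coefficient by
coefficient. -/
noncomputable def dualFunctional (n : ℕ) : WRing →ₗ[ZMod 2] ZMod 2 :=
  (basisMonomials (Fin 3) (ZMod 2)).constr (ZMod 2) fun m ↦ dualCoeff n (m 0) (m 1) (m 2)

lemma dualFunctional_wMonomial (n i j k : ℕ) :
    dualFunctional n (wMonomial i j k) = dualCoeff n i j k := by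
  have basis_eq : wMonomial i j k
      = basisMonomials (Fin 3) (ZMod 2) (Finsupp.equivFunOnFinite.symm ![i, j, k]) := by
    rw [wMonomial_eq_monomial, coe_basisMonomials]
  rw [basis_eq, dualFunctional, Module.Basis.constr_basis]
  simp

lemma dualCoeff_w3_free (n i k : ℕ) : dualCoeff n i 0 k = edgeCoeff n i k := by
  cases n <;> simp [dualCoeff]

lemma dualCoeff_of_odd {j : ℕ} (hj : j % 2 = 1) (n i k : ℕ) : dualCoeff n i j k = 0 := by
  cases n with
  | zero => rw [dualCoeff, if_neg (by omega), if_neg (by omega)]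
  | succ n => rw [dualCoeff, if_neg (by omega), if_neg (by omega)]

lemma dualCoeff_of_mod_four_ne {j : ℕ} (hj : j ≠ 0) (hj4 : j % 4 ≠ 2) (n i k : ℕ) :
    dualCoeff n i j k = 0 := by
  cases n with
  | zero => rw [dualCoeff, if_neg hj, if_neg (by omega)]
  | succ n =>
    rw [dualCoeff, if_neg hj]
    split_ifs with hijk
    · exact dualCoeff_of_odd (by omega) _ _ _
    · rfl

lemma edgeCoeff_succ_w4_free (n i : ℕ) : edgeCoeff (n + 1) i 0 = 0 := by
  have two_pow_le (u : ℕ) (hu : u ∈ range (n + 1 + 2)) : 2 ^ u ≤ 2 ^ (n + 2) :=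
    Nat.pow_le_pow_right two_pos (Nat.lt_succ_iff.1 (mem_range.1 hu))
  have := Nat.one_le_two_pow (n := n)
  rw [edgeCoeff, if_neg (by rw [show 2 ^ (n + 1 + 2) = 8 * 2 ^ n by ring]; omega), zero_add]
  refine sum_eq_zero fun u hu ↦ if_neg ?_
  have := two_pow_le u hu
  rw [show 2 ^ (n + 2) = 4 * 2 ^ n by ring] at this
  rw [show 2 ^ (n + 1 + 2) = 8 * 2 ^ n by ring]
  omega

lemma dualCoeff_succ_w4_free (n i j : ℕ) : dualCoeff (n + 1) i j 0 = 0 := by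
  obtain rfl | hj := eq_or_ne j 0
  · rw [dualCoeff_w3_free, edgeCoeff_succ_w4_free]
  · rw [dualCoeff, if_neg hj, if_neg (by omega)]

/- An instance of the transformation law of residues: the generators of
`I_{2 ^ (n + 4) - 1, 4}` arise from the squares of those of `I_{2 ^ (n + 3) - 1, 4}` by a matrix
of determinant `w_3 * w_4`. -/
lemma dualFunctional_succ_w3_mul_w4_mul (n : ℕ) (f : WRing) :
    dualFunctional (n + 1) (X 1 * X 2 * f) = dualFunctional n (cartier 2 f) := by
  induction f using wMonomial_induction with
  | add f g hf hg => rw [mul_add, map_add, hf, hg, map_add, map_add]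
  | wMonomial a b c =>
    have shift : X 1 * X 2 * wMonomial a b c = wMonomial a (b + 1) (c + 1) := by
      simp only [wMonomial]; ring
    rw [shift, cartier_wMonomial, dualFunctional_wMonomial, dualCoeff, if_neg (by omega)]
    by_cases odd : a % 2 = 1 ∧ b % 2 = 1 ∧ c % 2 = 1
    · rw [if_pos (by omega), if_pos odd, dualFunctional_wMonomial]
      congr 1 <;> omega
    · rw [if_neg (by omega), if_neg odd, map_zero]

lemma dualFunctional_succ_eq_zero_of_mem_supported (n : ℕ) {f : WRing}
    (hf : f ∈ supported (ZMod 2) {0, 1}) : dualFunctional (n + 1) f = 0 := by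
  rw [f.as_sum, map_sum]
  refine sum_eq_zero fun m hm ↦ ?_
  have w4_free : m 2 = 0 := by
    by_contra hm2
    have w4_mem := (mem_vars_iff_mem_support 2).2 ⟨m, hm, Finsupp.mem_support_iff.2 hm2⟩
    simpa using mem_supported.1 hf w4_mem
  rw [← mul_one (coeff m f), ← smul_eq_mul, ← smul_monomial, map_smul, monomial_one_eq_wMonomial,
    dualFunctional_wMonomial, w4_free, dualCoeff_succ_w4_free, smul_zero]

end DualFunctional

section W3FourthPowers

/-- The subalgebra `F_2[w_2, w_3 ^ 4, w_4]`. -/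
noncomputable def w3FourthPowers : Subalgebra (ZMod 2) WRing :=
  (aeval ![X 0, X 1 ^ 4, X 2] : WRing →ₐ[ZMod 2] WRing).range

/-- The reduction modulo `w_3`, as an endomorphism of `F_2[w_2, w_3, w_4]`. -/
noncomputable def setW3Zero : WRing →ₐ[ZMod 2] WRing := aeval ![X 0, 0, X 2]

lemma w2_mem_w3FourthPowers : X 0 ∈ w3FourthPowers := ⟨X 0, by simp⟩

lemma w3_pow_four_mem_w3FourthPowers : X 1 ^ 4 ∈ w3FourthPowers := ⟨X 1, by simp⟩

lemma w4_mem_w3FourthPowers : X 2 ∈ w3FourthPowers := ⟨X 2, by simp⟩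

lemma pPoly_sq_mem_w3FourthPowers (m : ℕ) : pPoly m ^ 2 ∈ w3FourthPowers := by
  induction m using Nat.twoStepInduction with
  | zero => rw [pPoly_zero, one_pow]; exact one_mem _
  | one => rw [pPoly_one]; exact pow_mem w2_mem_w3FourthPowers 2
  | more m ih₀ ih₁ =>
    have sq_eq : pPoly (m + 2) ^ 2
        = X 0 ^ 2 * (pPoly (m + 1) ^ 2) ^ 2 + X 1 ^ 4 * (pPoly m ^ 2) ^ 4 := by
      rw [pPoly_add_two, CharTwo.add_sq]; ring
    rw [sq_eq]
    exact add_mem (mul_mem (pow_mem w2_mem_w3FourthPowers 2) (pow_mem ih₁ 2))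
      (mul_mem w3_pow_four_mem_w3FourthPowers (pow_mem ih₀ 4))

lemma qPoly_mem_w3FourthPowers (m : ℕ) : qPoly m ∈ w3FourthPowers := by
  induction m with
  | zero => rw [qPoly_zero]; exact one_mem _
  | succ m ih =>
    rw [qPoly_succ]
    exact add_mem (pPoly_sq_mem_w3FourthPowers _) (mul_mem w4_mem_w3FourthPowers (pow_mem ih 2))

@[elab_as_elim]
lemma w3FourthPowers_induction {P : WRing → Prop} {f : WRing} (hf : f ∈ w3FourthPowers)
    (wMonomial : ∀ i j k, P (wMonomial i (4 * j) k)) (add : ∀ f g, P f → P g → P (f + g)) :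
    P f := by
  obtain ⟨h, rfl⟩ := (AlgHom.mem_range _).1 hf
  clear hf
  induction h using wMonomial_induction with
  | add g h hg hh => rw [map_add]; exact add _ _ hg hh
  | wMonomial i j k => simpa [OrientedGrassmannian.wMonomial, pow_mul] using wMonomial i j k

lemma setW3Zero_wMonomial (i j k : ℕ) :
    setW3Zero (wMonomial i j k) = if j = 0 then wMonomial i 0 k else 0 := by
  obtain rfl | hj := eq_or_ne j 0 <;> simp [setW3Zero, wMonomial, *]

lemma dualFunctional_mul_eq_mul_setW3Zero (n a c : ℕ) {f : WRing} (hf : f ∈ w3FourthPowers) :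
    dualFunctional n (wMonomial a 0 c * f) = dualFunctional n (wMonomial a 0 c * setW3Zero f) := by
  refine w3FourthPowers_induction hf (fun i j k ↦ ?_) (fun g h hg hh ↦ ?_)
  · obtain rfl | hj := eq_or_ne j 0
    · rw [mul_zero, setW3Zero_wMonomial, if_pos rfl]
    · rw [setW3Zero_wMonomial, if_neg (by omega), mul_zero, map_zero, wMonomial_mul_wMonomial,
        dualFunctional_wMonomial, dualCoeff_of_mod_four_ne (by omega) (by omega)]
  · rw [map_add, mul_add, mul_add, map_add, map_add, hg, hh]

lemma dualFunctional_mul_eq_zero_of_odd (n a c : ℕ) {b : ℕ} (hb : b % 2 = 1) {f : WRing}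
    (hf : f ∈ w3FourthPowers) : dualFunctional n (wMonomial a b c * f) = 0 := by
  refine w3FourthPowers_induction hf (fun i j k ↦ ?_) (fun g h hg hh ↦ ?_)
  · rw [wMonomial_mul_wMonomial, dualFunctional_wMonomial, dualCoeff_of_odd (by omega)]
  · rw [mul_add, map_add, hg, hh, add_zero]

lemma setW3Zero_pPoly (m : ℕ) : setW3Zero (pPoly m) = X 0 ^ (2 ^ m - 1) := by
  induction m using Nat.twoStepInduction with
  | zero => simp [pPoly_zero]
  | one => simp [pPoly_one, setW3Zero]
  | more m _ ih =>
    have exponent : (2 ^ (m + 1) - 1) * 2 + 1 = 2 ^ (m + 2) - 1 := by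
      have := Nat.one_le_two_pow (n := m)
      rw [pow_succ, pow_add]; omega
    rw [pPoly_add_two, ← exponent, pow_succ' (X 0 : WRing), pow_mul, ← ih]
    simp [setW3Zero]

lemma setW3Zero_qPoly (m : ℕ) : setW3Zero (qPoly m) =
    ∑ v ∈ range (m + 1), wMonomial (2 ^ (m + 1) - 2 ^ (v + 1)) 0 (2 ^ v - 1) := by
  induction m with
  | zero => simp [qPoly_zero, wMonomial]
  | succ m ih =>
    have first : (X 0 ^ (2 ^ (m + 1) - 1)) ^ 2
        = wMonomial (2 ^ (m + 1 + 1) - 2 ^ (0 + 1)) 0 (2 ^ 0 - 1) := by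
      simp [wMonomial, ← pow_mul, Nat.sub_mul, ← pow_succ]
    have later (v : ℕ) : X 2 * wMonomial (2 ^ (m + 1) - 2 ^ (v + 1)) 0 (2 ^ v - 1) ^ 2
        = wMonomial (2 ^ (m + 1 + 1) - 2 ^ (v + 1 + 1)) 0 (2 ^ (v + 1) - 1) := by
      have := Nat.one_le_two_pow (n := v)
      rw [show 2 ^ (v + 1) - 1 = 2 * (2 ^ v - 1) + 1 by rw [pow_succ]; omega,
        show 2 ^ (m + 1 + 1) - 2 ^ (v + 1 + 1) = 2 * (2 ^ (m + 1) - 2 ^ (v + 1)) by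
          rw [pow_succ _ (m + 1), pow_succ _ (v + 1)]; omega]
      simp only [wMonomial]; ring
    rw [qPoly_succ, map_add, map_mul, map_pow, map_pow, setW3Zero_pPoly, ih, CharTwo.sum_sq,
      show setW3Zero (X 2) = X 2 by simp [setW3Zero], mul_sum, sum_range_succ' _ (m + 1), first,
      sum_congr rfl fun v _ ↦ later v, add_comm]

end W3FourthPowers

section Edge

lemma sum_edgeCoeff_eq_zero (n a c : ℕ) :
    ∑ v ∈ range (n + 2), edgeCoeff n (a + (2 ^ (n + 2) - 2 ^ (v + 1))) (c + (2 ^ v - 1)) = 0 := by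
  set F : ℕ → ZMod 2 := fun E ↦ if a + 4 = 2 * E ∧ c + 1 + E = 2 ^ (n + 2) then 1 else 0 with hF
  have edge_eq (v : ℕ) (hv : v ∈ range (n + 2)) :
      edgeCoeff n (a + (2 ^ (n + 2) - 2 ^ (v + 1))) (c + (2 ^ v - 1))
        = F (2 ^ v) + ∑ u ∈ range (n + 2), F (2 ^ v + 2 ^ u) := by
    have := Nat.pow_le_pow_right two_pos (mem_range.1 hv)
    have := Nat.one_le_two_pow (n := v)
    rw [Nat.succ_eq_add_one, pow_succ 2 v] at *
    rw [edgeCoeff]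
    congr 1
    · exact if_congr (by omega) rfl rfl
    · exact sum_congr rfl fun u _ ↦ if_congr (by omega) rfl rfl
  rw [sum_congr rfl edge_eq, sum_two_pow_add_sum_sum, hF]
  simp

lemma edgeCoeff_succ (n a c : ℕ) : edgeCoeff (n + 1) (a + 1 + 2 * (2 ^ (n + 2) - 1)) c =
    if a % 2 = 1 ∧ c % 2 = 0 ∧ 2 ≤ c then
      edgeCoeff n (a / 2 + 2 * (2 ^ (n + 1) - 1)) (c / 2 - 1)
    else 0 := by
  have := Nat.one_le_two_pow (n := n + 1)
  rw [edgeCoeff, sum_range_succ', pow_succ 2 (n + 2), pow_succ 2 (n + 1), if_neg (by omega),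
    if_neg (by omega), add_zero, zero_add]
  split_ifs with parity
  · rw [edgeCoeff, pow_succ 2 (n + 1), if_neg (by omega), zero_add]
    refine sum_congr rfl fun u _ ↦ if_congr ?_ rfl rfl
    rw [pow_succ 2 u]; omega
  · refine sum_eq_zero fun u hu ↦ if_neg ?_
    have := Nat.pow_le_pow_right two_pos (Nat.lt_succ_iff.1 (mem_range.1 hu))
    rw [pow_succ 2 u]; omega

lemma dualFunctional_mul_qPoly (n a c : ℕ) :
    dualFunctional n (wMonomial a 0 c * qPoly (n + 1)) = 0 := by
  rw [dualFunctional_mul_eq_mul_setW3Zero _ _ _ (qPoly_mem_w3FourthPowers _), setW3Zero_qPoly,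
    mul_sum, map_sum, ← sum_edgeCoeff_eq_zero n a c]
  refine sum_congr rfl fun v _ ↦ ?_
  rw [wMonomial_mul_wMonomial, dualFunctional_wMonomial, dualCoeff_w3_free]

lemma dualFunctional_mul_pPoly_sq (n a c m : ℕ) :
    dualFunctional n (wMonomial a 0 c * pPoly m ^ 2) = edgeCoeff n (a + 2 * (2 ^ m - 1)) c := by
  have product : wMonomial a 0 c * (X 0 ^ (2 ^ m - 1)) ^ 2
      = wMonomial (a + 2 * (2 ^ m - 1)) 0 c := by
    simp only [wMonomial]; ring
  rw [dualFunctional_mul_eq_mul_setW3Zero _ _ _ (pPoly_sq_mem_w3FourthPowers _), map_pow,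
    setW3Zero_pPoly, product, dualFunctional_wMonomial, dualCoeff_w3_free]

lemma pPoly_mem_supported (m : ℕ) : pPoly m ∈ supported (ZMod 2) ({0, 1} : Set (Fin 3)) := by
  have hX (i : Fin 3) (hi : i ∈ ({0, 1} : Set (Fin 3))) : X i ∈ supported (ZMod 2) {0, 1} :=
    X_mem_supported.2 hi
  induction m using Nat.twoStepInduction with
  | zero => rw [pPoly_zero]; exact one_mem _
  | one => rw [pPoly_one]; exact hX 0 (by simp)
  | more m ih₀ ih₁ =>
    rw [pPoly_add_two]
    exact add_mem (mul_mem (hX 0 (by simp)) (pow_mem ih₁ 2))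
      (pow_mem (mul_mem (hX 1 (by simp)) (pow_mem ih₀ 2)) 2)

end Edge

section Annihilation

lemma mem_kerIdeal_dualFunctional_iff {n : ℕ} {h : WRing} : h ∈ kerIdeal (dualFunctional n) ↔
    ∀ a b c, dualFunctional n (wMonomial a b c * h) = 0 := by
  refine ⟨fun hh a b c ↦ hh _, fun hh f ↦ ?_⟩
  induction f using wMonomial_induction with
  | wMonomial a b c => exact hh a b c
  | add f g hf hg => rw [add_mul, map_add, hf, hg, add_zero]

lemma mem_kerIdeal_dualFunctional_succ {n : ℕ} {h : WRing}
    (interior : ∀ f, dualFunctional n (cartier 2 (f * h)) = 0)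
    (w3_free : ∀ a c, dualFunctional (n + 1) (wMonomial a 0 c * h) = 0)
    (w4_free : ∀ a b, dualFunctional (n + 1) (wMonomial a (b + 1) 0 * h) = 0) :
    h ∈ kerIdeal (dualFunctional (n + 1)) := by
  rw [mem_kerIdeal_dualFunctional_iff]
  rintro a (_ | b) (_ | c)
  · exact w3_free a 0
  · exact w3_free a (c + 1)
  · exact w4_free a b
  · have factor : wMonomial a (b + 1) (c + 1) * h = X 1 * X 2 * (wMonomial a b c * h) := by
      simp only [wMonomial]; ring
    rw [factor, dualFunctional_succ_w3_mul_w4_mul, interior]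

lemma wMonomial_mem_supported (a b : ℕ) : wMonomial a b 0 ∈ supported (ZMod 2) {0, 1} := by
  rw [wMonomial, pow_zero, mul_one]
  exact mul_mem (pow_mem (X_mem_supported.2 (by simp)) _) (pow_mem (X_mem_supported.2 (by simp)) _)

lemma dualFunctional_cartier_sq_mul {n : ℕ} {h : WRing} (hh : h ∈ kerIdeal (dualFunctional n))
    (f : WRing) : dualFunctional n (cartier 2 (h ^ 2 * f)) = 0 := by
  rw [cartier_sq_mul, mul_comm, hh]

lemma qPoly_mem_kerIdeal_succ {n : ℕ} (hq : qPoly (n + 1) ∈ kerIdeal (dualFunctional n))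
    (hp : pPoly (n + 2) ∈ kerIdeal (dualFunctional n)) :
    qPoly (n + 2) ∈ kerIdeal (dualFunctional (n + 1)) := by
  refine mem_kerIdeal_dualFunctional_succ (fun f ↦ ?_) (dualFunctional_mul_qPoly (n + 1))
    (fun a b ↦ ?_)
  · rw [qPoly_succ, show f * (pPoly (n + 2) ^ 2 + X 2 * qPoly (n + 1) ^ 2)
      = pPoly (n + 2) ^ 2 * f + qPoly (n + 1) ^ 2 * (X 2 * f) by ring, map_add, map_add,
      dualFunctional_cartier_sq_mul hp, dualFunctional_cartier_sq_mul hq, add_zero]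
  · have split : wMonomial a (b + 1) 0 * qPoly (n + 2) = wMonomial a (b + 1) 0 * pPoly (n + 2) ^ 2
        + X 1 * X 2 * (qPoly (n + 1) ^ 2 * wMonomial a b 0) := by
      rw [qPoly_succ]; simp only [wMonomial]; ring
    rw [split, map_add, dualFunctional_succ_w3_mul_w4_mul, dualFunctional_cartier_sq_mul hq,
      dualFunctional_succ_eq_zero_of_mem_supported _
        (mul_mem (wMonomial_mem_supported _ _) (pow_mem (pPoly_mem_supported _) 2)), add_zero]

lemma dualFunctional_succ_mul_pPoly (n a c : ℕ) :
    dualFunctional (n + 1) (wMonomial a 0 c * pPoly (n + 3)) = 0 := by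
  have split : wMonomial a 0 c * pPoly (n + 3)
      = wMonomial (a + 1) 0 c * pPoly (n + 2) ^ 2 + wMonomial a 2 c * pPoly (n + 1) ^ 4 := by
    rw [pPoly_add_two]; simp only [wMonomial]; ring
  rw [split, map_add, dualFunctional_mul_pPoly_sq, edgeCoeff_succ]
  obtain _ | c := c
  · rw [if_neg (by omega), zero_add]
    exact dualFunctional_succ_eq_zero_of_mem_supported _
      (mul_mem (wMonomial_mem_supported _ _) (pow_mem (pPoly_mem_supported _) 4))
  · have factor : wMonomial a 2 (c + 1) * pPoly (n + 1) ^ 4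
        = X 1 * X 2 * ((pPoly (n + 1) ^ 2) ^ 2 * wMonomial a 1 c) := by
      simp only [wMonomial]; ring
    rw [factor, dualFunctional_succ_w3_mul_w4_mul, cartier_sq_mul, cartier_wMonomial]
    by_cases odd : a % 2 = 1 ∧ c % 2 = 1
    · rw [if_pos (by omega), if_pos (by omega), mul_comm (pPoly _ ^ 2),
        show 1 / 2 = 0 from rfl, dualFunctional_mul_pPoly_sq,
        show (c + 1) / 2 - 1 = c / 2 by omega, CharTwo.add_self_eq_zero]
    · rw [if_neg (by omega), if_neg (by omega), mul_zero, map_zero, add_zero]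

lemma pPoly_mem_kerIdeal_succ {n : ℕ} (hp : pPoly (n + 2) ∈ kerIdeal (dualFunctional n))
    (hwp : X 1 * pPoly (n + 1) ^ 2 ∈ kerIdeal (dualFunctional n)) :
    pPoly (n + 3) ∈ kerIdeal (dualFunctional (n + 1)) := by
  refine mem_kerIdeal_dualFunctional_succ (fun f ↦ ?_) (dualFunctional_succ_mul_pPoly n)
    (fun a b ↦ dualFunctional_succ_eq_zero_of_mem_supported _
      (mul_mem (wMonomial_mem_supported _ _) (pPoly_mem_supported _)))
  rw [pPoly_add_two, show f * (X 0 * pPoly (n + 2) ^ 2 + (X 1 * pPoly (n + 1) ^ 2) ^ 2)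
    = pPoly (n + 2) ^ 2 * (X 0 * f) + (X 1 * pPoly (n + 1) ^ 2) ^ 2 * f by ring, map_add, map_add,
    dualFunctional_cartier_sq_mul hp, dualFunctional_cartier_sq_mul hwp, add_zero]

lemma w3_mul_pPoly_sq_mem_kerIdeal_succ {n : ℕ}
    (hp : pPoly (n + 2) ∈ kerIdeal (dualFunctional n)) :
    X 1 * pPoly (n + 2) ^ 2 ∈ kerIdeal (dualFunctional (n + 1)) := by
  have absorb (a b c : ℕ) : wMonomial a b c * (X 1 * pPoly (n + 2) ^ 2)
      = wMonomial a (b + 1) c * pPoly (n + 2) ^ 2 := by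
    simp only [wMonomial]; ring
  refine mem_kerIdeal_dualFunctional_succ (fun f ↦ ?_) (fun a c ↦ ?_) (fun a b ↦ ?_)
  · rw [show f * (X 1 * pPoly (n + 2) ^ 2) = pPoly (n + 2) ^ 2 * (X 1 * f) by ring,
      dualFunctional_cartier_sq_mul hp]
  · rw [absorb]
    exact dualFunctional_mul_eq_zero_of_odd _ _ _ rfl (pPoly_sq_mem_w3FourthPowers _)
  · rw [absorb]
    exact dualFunctional_succ_eq_zero_of_mem_supported _
      (mul_mem (wMonomial_mem_supported _ _) (pow_mem (pPoly_mem_supported _) 2))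

lemma edgeCoeff_zero (i k : ℕ) : edgeCoeff 0 i k = (if i = 0 ∧ k = 2 then 1 else 0)
    + (if i = 2 ∧ k = 1 then 1 else 0) + (if i = 4 ∧ k = 0 then 1 else 0) := by
  rw [edgeCoeff, sum_range_succ, sum_range_one]
  simp [add_assoc]

lemma qPoly_one_mem_kerIdeal : qPoly 1 ∈ kerIdeal (dualFunctional 0) := by
  rw [mem_kerIdeal_dualFunctional_iff]
  rintro a (_ | b) c
  · exact dualFunctional_mul_qPoly 0 a c
  · have expand : wMonomial a (b + 1) c * qPoly 1
        = wMonomial (a + 2) (b + 1) c + wMonomial a (b + 1) (c + 1) := by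
      rw [qPoly_succ, pPoly_one, qPoly_zero]; simp only [wMonomial]; ring
    rw [expand, map_add, dualFunctional_wMonomial, dualFunctional_wMonomial]
    simp [dualCoeff]

lemma pPoly_two_mem_kerIdeal : pPoly 2 ∈ kerIdeal (dualFunctional 0) := by
  rw [mem_kerIdeal_dualFunctional_iff]
  intro a b c
  have expand : wMonomial a b c * pPoly 2 = wMonomial (a + 3) b c + wMonomial a (b + 2) c := by
    rw [pPoly_add_two, pPoly_one, pPoly_zero]; simp only [wMonomial]; ring
  rw [expand, map_add, dualFunctional_wMonomial, dualFunctional_wMonomial]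
  obtain _ | b := b
  · by_cases corner : a = 1 ∧ c = 0
    · simp [dualCoeff, edgeCoeff_zero, corner, CharTwo.add_self_eq_zero]
    · simp [dualCoeff, edgeCoeff_zero, corner]
  · simp [dualCoeff]

lemma w3_mul_pPoly_one_sq_mem_kerIdeal : X 1 * pPoly 1 ^ 2 ∈ kerIdeal (dualFunctional 0) := by
  rw [mem_kerIdeal_dualFunctional_iff]
  intro a b c
  have expand : wMonomial a b c * (X 1 * pPoly 1 ^ 2) = wMonomial (a + 2) (b + 1) c := by
    rw [pPoly_one]; simp only [wMonomial]; ring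
  rw [expand, dualFunctional_wMonomial]
  simp [dualCoeff]

lemma I4_generators_mem_kerIdeal (n : ℕ) : qPoly (n + 1) ∈ kerIdeal (dualFunctional n) ∧
    pPoly (n + 2) ∈ kerIdeal (dualFunctional n) ∧
      X 1 * pPoly (n + 1) ^ 2 ∈ kerIdeal (dualFunctional n) := by
  induction n with
  | zero =>
    exact ⟨qPoly_one_mem_kerIdeal, pPoly_two_mem_kerIdeal, w3_mul_pPoly_one_sq_mem_kerIdeal⟩
  | succ n ih =>
    obtain ⟨hq, hp, hwp⟩ := ih
    exact ⟨qPoly_mem_kerIdeal_succ hq hp, pPoly_mem_kerIdeal_succ hp hwp,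
      w3_mul_pPoly_sq_mem_kerIdeal_succ hp⟩

theorem I4_le_kerIdeal_dualFunctional (n : ℕ) :
    I4 (2 ^ (n + 3) - 1) ≤ kerIdeal (dualFunctional n) :=
  let ⟨hq, hp, hwp⟩ := I4_generators_mem_kerIdeal n
  I4_two_pow_sub_one_le hq hp hwp

lemma dualFunctional_w4_mul_eq_zero (n : ℕ) {f : WRing} (hf : f ∈ I4 (2 ^ (n + 3) - 2)) :
    dualFunctional n (X 2 * f) = 0 := by
  have two_le : (2 : ℤ) ≤ 2 ^ (n + 3) := by
    have := one_le_pow₀ (n := n + 2) (one_le_two (α := ℤ))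
    rw [pow_succ]; omega
  have mem := w4_mul_mem_I4_add_one (by omega) hf
  rw [show (2 : ℤ) ^ (n + 3) - 2 + 1 = 2 ^ (n + 3) - 1 by ring] at mem
  exact map_eq_zero_of_mem_kerIdeal (I4_le_kerIdeal_dualFunctional n mem)

end Annihilation

section Detection

lemma edgeCoeff_of_lt {n k : ℕ} (hn : 2 ≤ n) (hk : k < 2 ^ (n + 1)) (i : ℕ) :
    edgeCoeff n i (k + 1) = if i = 2 ^ (n + 3) - 4 ∧ k = 2 ^ (n + 1) - 3 then 1 else 0 := by
  have := Nat.pow_le_pow_right two_pos hn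
  rw [pow_succ] at hk
  rw [edgeCoeff, sum_range_succ]
  simp only [pow_succ 2 n, pow_succ 2 (n + 1), pow_succ 2 (n + 2)]
  rw [if_neg (by omega), zero_add, sum_eq_zero, zero_add]
  · exact if_congr (by omega) rfl rfl
  · refine fun u hu ↦ if_neg ?_
    have := Nat.pow_le_pow_right two_pos (Nat.lt_succ_iff.1 (mem_range.1 hu))
    omega

lemma choose_mul_dualCoeff {n i k : ℕ} (hn : 2 ≤ n) (hi : i < 2 ^ (n + 3)) (hk : k < 2 ^ (n + 1))
    (j : ℕ) : ((2 ^ (n + 3) - 1).choose i * (2 ^ (n + 2) - 3).choose j *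
      (2 ^ (n + 1) - 1).choose k : ZMod 2) * dualCoeff n i j (k + 1)
        = if i = 2 ^ (n + 3) - 4 ∧ j = 0 ∧ k = 2 ^ (n + 1) - 3 then 1 else 0 := by
  rw [natCast_choose_prime_pow_sub_one _ _ hi, natCast_choose_prime_pow_sub_one _ _ hk,
    CharTwo.neg_eq, one_pow, one_pow, one_mul, mul_one]
  obtain rfl | hj := eq_or_ne j 0
  · rw [dualCoeff_w3_free, edgeCoeff_of_lt hn hk, Nat.choose_zero_right, Nat.cast_one, one_mul]
    simp
  rw [if_neg (by tauto)]
  by_cases hj4 : j % 4 = 2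
  · have even : 2 ∣ (2 ^ (n + 2) - 3).choose j := dvd_choose_of_digit_lt (s := 1) (by
      have := Nat.one_le_two_pow (n := n)
      rw [pow_add]; omega)
    rw [(ZMod.natCast_eq_zero_iff _ _).2 even, zero_mul]
  · rw [dualCoeff_of_mod_four_ne hj hj4, mul_zero]

lemma dualCoeff_eq_one (n : ℕ) :
    dualCoeff n (2 ^ (n + 1) - 1) (2 ^ (n + 2) - 2) (2 ^ (n + 1) - 2) = 1 := by
  induction n with
  | zero => simp [dualCoeff]
  | succ n ih =>
    have := Nat.one_le_two_pow (n := n)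
    simp only [pow_succ 2 n, pow_succ 2 (n + 1), pow_succ 2 (n + 2)] at ih ⊢
    rw [dualCoeff, if_neg (by omega), if_pos (by omega), ← ih]
    congr 1 <;> omega

lemma mk_wMonomial_ne_zero {n : ℕ} (hn : 2 ≤ n) :
    Ideal.Quotient.mk (I4 (2 ^ (n + 3) - 2)) (wMonomial 3 (2 ^ (n + 2) - 3) 2) ≠ 0 := by
  intro hzero
  have mem := Ideal.mul_mem_left _ (wMonomial (2 ^ (n + 1) - 4) 1 (2 ^ (n + 1) - 5))
    (Ideal.Quotient.eq_zero_iff_mem.1 hzero)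
  have := Nat.pow_le_pow_right two_pos hn
  have socle : X 2 * (wMonomial (2 ^ (n + 1) - 4) 1 (2 ^ (n + 1) - 5)
      * wMonomial 3 (2 ^ (n + 2) - 3) 2)
        = wMonomial (2 ^ (n + 1) - 1) (2 ^ (n + 2) - 2) (2 ^ (n + 1) - 2) := by
    rw [show X 2 = wMonomial 0 0 1 by simp [wMonomial], wMonomial_mul_wMonomial,
      wMonomial_mul_wMonomial]
    simp only [pow_succ 2 n, pow_succ 2 (n + 1)]
    congr 1 <;> omega
  have pairing := dualFunctional_w4_mul_eq_zero n mem
  rw [socle, dualFunctional_wMonomial, dualCoeff_eq_one] at pairing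
  exact one_ne_zero pairing

lemma exists_map_mk_wMonomial_eq_dualCoeff (n : ℕ) :
    ∃ φ : (WRing ⧸ I4 (2 ^ (n + 3) - 2)) →ₗ[ZMod 2] ZMod 2,
      ∀ i j k, φ (Ideal.Quotient.mk _ (wMonomial i j k)) = dualCoeff n i j (k + 1) := by
  obtain ⟨φ, hφ⟩ := exists_map_quotient_mk_eq
    (ψ := dualFunctional n ∘ₗ LinearMap.mulLeft (ZMod 2) (X 2))
    fun _ hf ↦ dualFunctional_w4_mul_eq_zero n hf
  refine ⟨φ, fun i j k ↦ ?_⟩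
  rw [hφ, LinearMap.comp_apply, LinearMap.mulLeft_apply, ← dualFunctional_wMonomial]
  simp only [wMonomial]
  ring_nf

lemma prod_mk_X_pow (I : Ideal WRing) (a : Fin 3 → ℕ) :
    ∏ i, Ideal.Quotient.mk I (X i) ^ a i = Ideal.Quotient.mk I (wMonomial (a 0) (a 1) (a 2)) := by
  simp [wMonomial, Fin.prod_univ_three]

end Detection

end OrientedGrassmannian

open OrientedGrassmannian

open TensorProduct in
/-- Proposition 5.4 (key step): let `t ≥ 5` and `B = F_2[w_2,w_3,w_4]/I_{2^t-2,4}`.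
In `B ⊗_{F_2} B`, with `z(x) = 1⊗x + x⊗1`, the product
`z(w̃_2)^{2^t-1} · z(w̃_3)^{2^{t-1}-3} · z(w̃_4)^{2^{t-2}-1}` is nonzero
(whence `zcl(W_{n,4}) ≥ 2^t + 2^{t-1} + 2^{t-2} - 5` for all `n ≥ 2^t - 2`). -/
theorem stmt19 (t : ℕ) (ht : 5 ≤ t) :
    ((1 : MvPolynomial (Fin 3) (ZMod 2) ⧸ I4 (2 ^ t - 2)) ⊗ₜ[ZMod 2]
          Ideal.Quotient.mk (I4 (2 ^ t - 2)) (X 0)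
        + Ideal.Quotient.mk (I4 (2 ^ t - 2)) (X 0) ⊗ₜ[ZMod 2]
          (1 : MvPolynomial (Fin 3) (ZMod 2) ⧸ I4 (2 ^ t - 2))) ^ (2 ^ t - 1)
      * ((1 : MvPolynomial (Fin 3) (ZMod 2) ⧸ I4 (2 ^ t - 2)) ⊗ₜ[ZMod 2]
            Ideal.Quotient.mk (I4 (2 ^ t - 2)) (X 1)
          + Ideal.Quotient.mk (I4 (2 ^ t - 2)) (X 1) ⊗ₜ[ZMod 2]
            (1 : MvPolynomial (Fin 3) (ZMod 2) ⧸ I4 (2 ^ t - 2))) ^ (2 ^ (t - 1) - 3)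
      * ((1 : MvPolynomial (Fin 3) (ZMod 2) ⧸ I4 (2 ^ t - 2)) ⊗ₜ[ZMod 2]
            Ideal.Quotient.mk (I4 (2 ^ t - 2)) (X 2)
          + Ideal.Quotient.mk (I4 (2 ^ t - 2)) (X 2) ⊗ₜ[ZMod 2]
            (1 : MvPolynomial (Fin 3) (ZMod 2) ⧸ I4 (2 ^ t - 2))) ^ (2 ^ (t - 2) - 1)
      ≠ 0 := by
  obtain ⟨n, rfl⟩ : ∃ n, t = n + 3 := ⟨t - 3, by omega⟩
  have hn : 2 ≤ n := by omega
  have := Nat.pow_le_pow_right two_pos hn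
  let x (i : Fin 3) : WRing ⧸ I4 (2 ^ (n + 3) - 2) := Ideal.Quotient.mk _ (X i)
  let N : Fin 3 → ℕ := ![2 ^ (n + 3) - 1, 2 ^ (n + 2) - 3, 2 ^ (n + 1) - 1]
  let e : Fin 3 → ℕ := ![2 ^ (n + 3) - 4, 0, 2 ^ (n + 1) - 3]
  obtain ⟨φ, hφ⟩ := exists_map_mk_wMonomial_eq_dualCoeff n
  have heN : e ≤ N := fun i ↦ by
    fin_cases i
    exacts [Nat.sub_le_sub_left (by norm_num) _, Nat.zero_le _, Nat.sub_le_sub_left (by norm_num) _]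
  have detect (a) (ha : a ≤ N) : (∏ i, ((N i).choose (a i) : ZMod 2)) * φ (∏ i, x i ^ a i)
      = if a = e then 1 else 0 := by
    rw [prod_mk_X_pow, hφ, Fin.prod_univ_three]
    refine (choose_mul_dualCoeff hn ?_ ?_ _).trans (if_congr ?_ rfl rfl)
    · exact Nat.lt_of_le_pred (by positivity) (ha 0)
    · exact Nat.lt_of_le_pred (by positivity) (ha 2)
    · simp [funext_iff, Fin.forall_fin_succ, e]
  have hne : ∏ i, x i ^ (N i - e i) ≠ 0 := by
    rw [prod_mk_X_pow]
    convert mk_wMonomial_ne_zero hn using 3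
    · change 2 ^ (n + 3) - 1 - (2 ^ (n + 3) - 4) = 3
      rw [pow_add]; omega
    · rfl
    · change 2 ^ (n + 1) - 1 - (2 ^ (n + 1) - 3) = 2
      rw [pow_add]; omega
  have main := prod_zeroDivisor_pow_ne_zero x N e φ heN detect hne
  rwa [Fin.prod_univ_three] at main
end
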